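/- There is a constant C > 0 such that for every probability space (X, ℬ, μ) with a measurable, measure-preserving transformation T : X → X and every measurable set A ∈ ℬ with μ(A) > 0, one has sup_{λ>0} λ · μ{x ∈ X : sup_{N ≥ 2} 𝒜_N(𝟙_A)(x) > λ} ≤ C μ(A) log²(e/μ(A)). -/

import Mathlib

open MeasureTheory Filter
open scoped BigOperators

universe u

/-- The set of primes `p ≤ N`. -/
def primesUpTo (N : ℕ) : Finset ℕ := (Finset.range (N + 1)).filter Nat.Prime

/-- The ergodic average `𝒜_N f(x) = (1/π(N)) Σ_{p ∈ ℙ_N} f(T^p x)`. -/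
noncomputable def ergAvg {X : Type u} (T : X → X) (f : X → ℝ) (N : ℕ) (x : X) : ℝ :=
  ((primesUpTo N).card : ℝ)⁻¹ * ∑ p ∈ primesUpTo N, f (T^[p] x)


namespace PrimeMax
open Finset

/-- primes in `(a, b]` -/
def Pr (a b : ℕ) : Finset ℕ := (Finset.Ioc a b).filter Nat.Prime

lemma mem_Pr {a b p : ℕ} : p ∈ Pr a b ↔ (a < p ∧ p ≤ b) ∧ p.Prime := by
  simp [Pr]

lemma card_primes_lower : ∀ N : ℕ, 2 ≤ N →
    (1/10 : ℝ) * N ≤ (primesUpTo N).card * Real.log N := by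
  intro N hN
  have hN' : (2:ℝ) ≤ N := by exact_mod_cast hN
  have h1 := Chebyshev.pi_ge N
  have hlog : 0 < Real.log N := Real.log_pos (by linarith)
  rw [div_le_iff₀ hlog] at h1
  have h2 : (Nat.primeCounting N) = (primesUpTo N).card := by
    rw [Nat.primeCounting, Nat.primeCounting', Nat.count_eq_card_filter_range, primesUpTo]
  rw [h2] at h1
  refine le_trans ?_ h1
  have h3 : Real.log ((N:ℝ) + 1) ≤ Real.log 3 + ((N:ℝ) - 2)/3 := by
    have := Real.log_le_sub_one_of_pos (show (0:ℝ) < ((N:ℝ)+1)/3 by positivity)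
    rw [Real.log_div (by positivity) (by norm_num)] at this
    linarith
  have h4 : (1/4:ℝ) ≤ 2 * Real.log 2 - Real.log 3 := by
    have := Real.one_sub_inv_le_log_of_pos (show (0:ℝ) < 4/3 by norm_num)
    rw [Real.log_div (by norm_num) (by norm_num)] at this
    have h5 : Real.log 4 = 2 * Real.log 2 := by
      rw [show (4:ℝ) = 2^2 by norm_num, Real.log_pow]; norm_num
    rw [h5] at this
    linarith
  have h6 := Real.log_two_gt_d9
  nlinarith

lemma card_Pr_dyadic (I : ℕ) : I * (Pr (2^I) (2^(I+1))).card ≤ 2 * 2^I := by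
  set n := 2^I with hn
  have h2n : 2^(I+1) = 2*n := by rw [hn]; ring
  rw [h2n]
  have h1 : ∏ p ∈ Pr n (2*n), p ∣ Nat.centralBinom n := by
    apply Finset.prod_primes_dvd
    · intro p hp
      exact (mem_Pr.1 hp).2.prime
    · intro p hp
      obtain ⟨⟨h1, h2⟩, h3⟩ := mem_Pr.1 hp
      have h4 : p ∣ Nat.centralBinom n * n.factorial * n.factorial := by
        have := Nat.choose_mul_factorial_mul_factorial (show n ≤ 2*n by omega)
        rw [show 2*n - n = n by omega] at this
        rw [Nat.centralBinom, this]
        exact (Nat.Prime.dvd_factorial h3).2 h2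
      have h5 : ¬ p ∣ n.factorial := by
        rw [Nat.Prime.dvd_factorial h3]; omega
      rcases (Nat.Prime.dvd_mul h3).1 h4 with h | h
      · rcases (Nat.Prime.dvd_mul h3).1 h with h | h
        · exact h
        · exact absurd h h5
      · exact absurd h h5
  have h2 := Nat.le_of_dvd (Nat.centralBinom_pos n) h1
  have h3 : Nat.centralBinom n ≤ 2^(2*n) := Nat.choose_le_two_pow _ _
  have h4 : n ^ (Pr n (2*n)).card ≤ ∏ p ∈ Pr n (2*n), p := by
    apply Finset.pow_card_le_prod
    intro p hp
    exact (mem_Pr.1 hp).1.1.le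
  have h5 := (h4.trans h2).trans h3
  rw [hn, ← pow_mul] at h5
  exact (Nat.pow_le_pow_iff_right (by norm_num)).1 h5

/-- Euler factor -/
noncomputable def ef (p : ℕ) : ℝ := (p:ℝ) / ((p:ℝ) - 1)

lemma ef_eq {p : ℕ} (hp : 2 ≤ p) : ef p = 1 + 1 / ((p:ℝ)-1) := by
  have : (2:ℝ) ≤ p := by exact_mod_cast hp
  rw [ef]; field_simp [show (p:ℝ) - 1 ≠ 0 by linarith]; ring

lemma ef_pos {p : ℕ} (hp : 2 ≤ p) : 0 < ef p := by
  have : (2:ℝ) ≤ p := by exact_mod_cast hp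
  exact div_pos (by linarith) (by linarith)

lemma Pr_union {a b c : ℕ} (hab : a ≤ b) (hbc : b ≤ c) : Pr a c = Pr a b ∪ Pr b c := by
  ext p; simp only [mem_Pr, Finset.mem_union]; constructor
  · rintro ⟨⟨h1, h2⟩, h3⟩
    rcases le_or_gt p b with h | h
    · left; exact ⟨⟨h1, h⟩, h3⟩
    · right; exact ⟨⟨h, h2⟩, h3⟩
  · rintro (⟨⟨h1, h2⟩, h3⟩ | ⟨⟨h1, h2⟩, h3⟩)
    · exact ⟨⟨h1, by omega⟩, h3⟩
    · exact ⟨⟨by omega, by omega⟩, h3⟩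

lemma Pr_disj {a b c : ℕ} : Disjoint (Pr a b) (Pr b c) := by
  rw [Finset.disjoint_left]
  intro p h1 h2
  have := (mem_Pr.1 h1).1.2
  have := (mem_Pr.1 h2).1.1
  omega

lemma prod_Pr_union {M : Type*} [CommMonoid M] (g : ℕ → M) {a b c : ℕ} (hab : a ≤ b) (hbc : b ≤ c) :
    ∏ p ∈ Pr a c, g p = (∏ p ∈ Pr a b, g p) * ∏ p ∈ Pr b c, g p := by
  rw [Pr_union hab hbc, Finset.prod_union Pr_disj]

lemma V_step (I : ℕ) (hI : 1 ≤ I) : ∏ p ∈ Pr (2^I) (2^(I+1)), ef p ≤ Real.exp (2 / I) := by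
  have h1 : ∏ p ∈ Pr (2^I) (2^(I+1)), ef p ≤ ∏ p ∈ Pr (2^I) (2^(I+1)), Real.exp (1 / (2:ℝ)^I) := by
    apply Finset.prod_le_prod
    · intro p hp
      exact (ef_pos (mem_Pr.1 hp).2.two_le).le
    · intro p hp
      obtain ⟨⟨h1, h2⟩, h3⟩ := mem_Pr.1 hp
      rw [ef_eq h3.two_le]
      have h4 : (2:ℝ)^I ≤ (p:ℝ) - 1 := by
        have : 2^I + 1 ≤ p := h1
        have : ((2^I + 1 : ℕ):ℝ) ≤ p := by exact_mod_cast this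
        push_cast at this; linarith
      have h5 : 1 / ((p:ℝ)-1) ≤ 1 / (2:ℝ)^I := one_div_le_one_div_of_le (by positivity) h4
      have := Real.add_one_le_exp (1 / (2:ℝ)^I)
      linarith
  refine h1.trans ?_
  rw [Finset.prod_const, ← Real.exp_nat_mul]
  apply Real.exp_le_exp.2
  have h2 : ((I * (Pr (2^I) (2^(I+1))).card : ℕ) : ℝ) ≤ ((2 * 2^I : ℕ) : ℝ) := by
    exact_mod_cast card_Pr_dyadic I
  push_cast at h2
  have hI' : (0:ℝ) < I := by exact_mod_cast hI
  rw [mul_one_div, div_le_div_iff₀ (by positivity) hI']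
  linarith

lemma V_bound' (I : ℕ) : ∏ p ∈ Pr 0 (2^(I+1)), ef p ≤ 2 * Real.exp (2 * (harmonic I : ℝ)) := by
  induction I with
  | zero =>
    have : Pr 0 (2^(0+1)) = {2} := by decide
    rw [this]; simp [ef]; norm_num
  | succ I ih =>
    rw [prod_Pr_union ef (Nat.zero_le _) (Nat.pow_le_pow_right (by norm_num) (Nat.le_succ (I+1)))]
    have h := V_step (I+1) (by omega)
    calc _ ≤ (2 * Real.exp (2 * (harmonic I : ℝ))) * Real.exp (2 / ((I+1:ℕ):ℝ)) := by
          apply mul_le_mul ih h _ (by positivity)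
          exact Finset.prod_nonneg fun p hp => (ef_pos (mem_Pr.1 hp).2.two_le).le
      _ = _ := by
          rw [mul_assoc, ← Real.exp_add, harmonic_succ]; push_cast
          congr 2; ring

/-- Mertens-type upper bound. -/
lemma V_bound (I : ℕ) (hI : 1 ≤ I) : ∏ p ∈ Pr 0 (2^I), ef p ≤ 2 * Real.exp 2 * (I:ℝ)^2 := by
  obtain ⟨k, rfl⟩ : ∃ k, I = k+1 := ⟨I-1, by omega⟩
  refine (V_bound' k).trans ?_
  have h := harmonic_le_one_add_log (k+1)
  have h' : (harmonic k : ℝ) ≤ 1 + Real.log ((k+1:ℕ):ℝ) := by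
    refine le_trans ?_ h
    rw [harmonic_succ]; push_cast
    have : (0:ℝ) ≤ ((k:ℝ)+1)⁻¹ := by positivity
    linarith
  have : Real.exp (2 * (harmonic k : ℝ)) ≤ Real.exp (2 + 2 * Real.log ((k+1:ℕ):ℝ)) :=
    Real.exp_le_exp.2 (by linarith)
  rw [Real.exp_add 2, mul_comm 2 (Real.log _), Real.exp_mul (Real.log _), Real.exp_log (by positivity)] at this
  calc _ ≤ 2 * (Real.exp 2 * ((k+1:ℕ):ℝ)^(2:ℝ)) := by linarith
    _ = _ := by rw [Real.rpow_two]; ring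

end PrimeMax

namespace PrimeMax
open Finset

noncomputable def invHom : ℕ →* ℝ where
  toFun n := ((n:ℝ))⁻¹
  map_one' := by simp
  map_mul' a b := by push_cast; rw [mul_inv]

lemma fib_sum (F B : Finset ℕ) (hF : ∀ p ∈ F, p.Prime)
    (hB : ∀ n ∈ B, n ≠ 0 ∧ n.primeFactors = F) :
    ∑ n ∈ B, ((n:ℝ))⁻¹ ≤ ∏ p ∈ F, (1 / ((p:ℝ) - 1)) := by
  obtain ⟨hs, hsum⟩ := EulerProduct.summable_and_hasSum_factoredNumbers_prod_filter_prime_geometric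
    (f := invHom) (by
      intro p hp
      have : (1:ℝ) < p := by exact_mod_cast hp.one_lt
      simp only [invHom, MonoidHom.coe_mk, OneHom.coe_mk, norm_inv, Real.norm_natCast]
      exact inv_lt_one_of_one_lt₀ this) F
  rw [Finset.filter_true_of_mem hF] at hsum
  set P := ∏ p ∈ F, p with hP
  have hP0 : 0 < P := Finset.prod_pos fun p hp => (hF p hp).pos
  have hdvd : ∀ n ∈ B, P ∣ n := by
    intro n hn
    rw [hP, ← (hB n hn).2]; exact Nat.prod_primeFactors_dvd n
  -- injection into factored numbers
  have hmem : ∀ n ∈ B, n / P ∈ Nat.factoredNumbers F := by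
    intro n hn
    rw [Nat.mem_factoredNumbers_iff_primeFactors_subset]
    have hd : n / P ∣ n := Nat.div_dvd_of_dvd (hdvd n hn)
    refine ⟨?_, ?_⟩
    · exact (Nat.div_pos (Nat.le_of_dvd (Nat.pos_of_ne_zero (hB n hn).1) (hdvd n hn)) hP0).ne'
    · rw [← (hB n hn).2]
      exact Nat.primeFactors_mono hd (hB n hn).1
  let e : {n // n ∈ B} → Nat.factoredNumbers F := fun n => ⟨n.1 / P, hmem n.1 n.2⟩
  have he : Function.Injective e := by
    intro a b hab
    have h1 : a.1 / P = b.1 / P := congrArg Subtype.val hab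
    apply Subtype.ext
    rw [← Nat.div_mul_cancel (hdvd a.1 a.2), ← Nat.div_mul_cancel (hdvd b.1 b.2), h1]
  have h1 : ∑ n ∈ B.attach, invHom (e n) ≤ ∏ p ∈ F, (1 - invHom p)⁻¹ := by
    have h2 := sum_le_hasSum (B.attach.map ⟨e, he⟩) (fun i _ => by
      simp only [invHom, MonoidHom.coe_mk, OneHom.coe_mk]; positivity) hsum
    rwa [Finset.sum_map] at h2
  have h3 : ∑ n ∈ B, ((n:ℝ))⁻¹ = (P:ℝ)⁻¹ * ∑ n ∈ B.attach, invHom (e n) := by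
    rw [← Finset.sum_attach, Finset.mul_sum]
    refine Finset.sum_congr rfl fun n _ => ?_
    simp only [invHom, MonoidHom.coe_mk, OneHom.coe_mk, e]
    rw [← mul_inv, ← Nat.cast_mul, Nat.mul_div_cancel' (hdvd n.1 n.2)]
  rw [h3]
  calc _ ≤ (P:ℝ)⁻¹ * ∏ p ∈ F, (1 - invHom p)⁻¹ := by
        apply mul_le_mul_of_nonneg_left h1; positivity
    _ = _ := by
        rw [hP, Nat.cast_prod, ← Finset.prod_inv_distrib, ← Finset.prod_mul_distrib]
        refine Finset.prod_congr rfl fun p hp => ?_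
        have : (1:ℝ) < p := by exact_mod_cast (hF p hp).one_lt
        simp only [invHom, MonoidHom.coe_mk, OneHom.coe_mk]
        have : (p:ℝ) - 1 ≠ 0 := by linarith
        have h0 : (p:ℝ) ≠ 0 := by linarith
        have : 1 - (p:ℝ)⁻¹ = ((p:ℝ) - 1)/p := by field_simp
        rw [this]; field_simp

/-- Selberg family -/
def SF (u Q : ℕ) : Finset (Finset ℕ) := (Pr u Q).powerset.filter (fun S => ∏ p ∈ S, p ≤ Q)

lemma mem_SF {u Q : ℕ} {S : Finset ℕ} : S ∈ SF u Q ↔ S ⊆ Pr u Q ∧ ∏ p ∈ S, p ≤ Q := by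
  simp [SF]

noncomputable def iphi (S : Finset ℕ) : ℝ := ∏ p ∈ S, (1 / ((p:ℝ) - 1))

noncomputable def GG (u Q : ℕ) : ℝ := ∑ S ∈ SF u Q, iphi S

lemma iphi_nonneg {S : Finset ℕ} (hS : ∀ p ∈ S, p.Prime) : 0 ≤ iphi S :=
  Finset.prod_nonneg fun p hp => by
    have : (1:ℝ) < p := by exact_mod_cast (hS p hp).one_lt
    have : (0:ℝ) < (p:ℝ) - 1 := by linarith
    positivity

lemma prime_of_sub_Pr {a b : ℕ} {S : Finset ℕ} (h : S ⊆ Pr a b) : ∀ p ∈ S, p.Prime :=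
  fun _ hp => (mem_Pr.1 (h hp)).2

lemma GG_lower (u Q : ℕ) (hQ : 1 ≤ Q) :
    Real.log Q ≤ GG u Q * ∏ p ∈ Pr 0 u, ef p := by
  have h1 : Real.log Q ≤ ∑ n ∈ Finset.Icc 1 Q, ((n:ℝ))⁻¹ := by
    have h := log_add_one_le_harmonic Q
    rw [harmonic_eq_sum_Icc] at h
    push_cast at h
    refine le_trans (Real.log_le_log (by exact_mod_cast hQ) (by linarith)) h
  refine h1.trans ?_
  have hmaps : ∀ n ∈ Finset.Icc 1 Q,
      (n.primeFactors.filter (fun p => u < p), n.primeFactors.filter (fun p => ¬ u < p)) ∈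
        SF u Q ×ˢ (Pr 0 u).powerset := by
    intro n hn
    rw [Finset.mem_Icc] at hn
    rw [Finset.mem_product, mem_SF, Finset.mem_powerset]
    have hle : ∀ p ∈ n.primeFactors, p ≤ Q := fun p hp =>
      (Nat.le_of_mem_primeFactors hp).trans hn.2
    refine ⟨⟨?_, ?_⟩, ?_⟩
    · intro p hp
      rw [Finset.mem_filter] at hp
      exact mem_Pr.2 ⟨⟨hp.2, hle p hp.1⟩, Nat.prime_of_mem_primeFactors hp.1⟩
    · refine le_trans (Nat.le_of_dvd hn.1 ?_) hn.2
      exact (Finset.prod_dvd_prod_of_subset _ _ _ (Finset.filter_subset _ _)).trans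
        (Nat.prod_primeFactors_dvd n)
    · intro p hp
      rw [Finset.mem_filter] at hp
      have := Nat.prime_of_mem_primeFactors hp.1
      exact mem_Pr.2 ⟨⟨this.pos, by omega⟩, this⟩
  rw [← Finset.sum_fiberwise_of_maps_to hmaps]
  have h2 : GG u Q * ∏ p ∈ Pr 0 u, ef p =
      ∑ x ∈ SF u Q ×ˢ (Pr 0 u).powerset, iphi x.1 * iphi x.2 := by
    rw [Finset.sum_product, GG, Finset.sum_mul]
    refine Finset.sum_congr rfl fun S _ => ?_
    simp only
    rw [← Finset.mul_sum]
    congr 1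
    rw [Finset.prod_congr rfl (fun p hp => ef_eq (mem_Pr.1 hp).2.two_le), Finset.prod_one_add]
    rfl
  rw [h2]
  refine Finset.sum_le_sum fun x hx => ?_
  rw [Finset.mem_product, mem_SF, Finset.mem_powerset] at hx
  have hdisj : Disjoint x.1 x.2 := by
    rw [Finset.disjoint_left]
    intro p h1 h2
    have := (mem_Pr.1 (hx.1.1 h1)).1.1
    have := (mem_Pr.1 (hx.2 h2)).1.2
    omega
  have : iphi x.1 * iphi x.2 = iphi (x.1 ∪ x.2) := by
    rw [iphi, iphi, iphi, Finset.prod_union hdisj]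
  rw [this]
  apply fib_sum
  · intro p hp
    rcases Finset.mem_union.1 hp with h | h
    · exact (mem_Pr.1 (hx.1.1 h)).2
    · exact (mem_Pr.1 (hx.2 h)).2
  · intro n hn
    rw [Finset.mem_filter, Finset.mem_Icc] at hn
    refine ⟨by omega, ?_⟩
    rw [← hn.2]
    simp only
    rw [Finset.filter_union_filter_not_eq]

lemma GG_pos (u Q : ℕ) (hQ : 1 ≤ Q) : 1 ≤ GG u Q := by
  have h : (∅ : Finset ℕ) ∈ SF u Q := by simp [mem_SF, hQ]
  have := Finset.single_le_sum (f := iphi) (fun S hS => iphi_nonneg (prime_of_sub_Pr (mem_SF.1 hS).1)) h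
  simpa [iphi, GG] using this

end PrimeMax

namespace PrimeMax
open Finset

noncomputable def chi (p : ℕ) (n : ℤ) : ℝ := if (p:ℤ) ∣ n then -1 else 1 / ((p:ℝ) - 1)

noncomputable def chiS (S : Finset ℕ) (n : ℤ) : ℝ := ∏ p ∈ S, chi p n

def mS (S : Finset ℕ) : ℕ := ∏ p ∈ S, p

lemma mS_pos {S : Finset ℕ} (hS : ∀ p ∈ S, p.Prime) : 0 < mS S :=
  Finset.prod_pos fun p hp => (hS p hp).pos

lemma abs_chi_le {p : ℕ} (hp : p.Prime) (n : ℤ) : |chi p n| ≤ 1 := by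
  have : (2:ℝ) ≤ p := by exact_mod_cast hp.two_le
  unfold chi
  split_ifs
  · simp
  · rw [abs_of_nonneg (by apply div_nonneg <;> linarith), div_le_one (by linarith)]
    linarith

lemma abs_chiS_le {S : Finset ℕ} (hS : ∀ p ∈ S, p.Prime) (n : ℤ) : |chiS S n| ≤ 1 := by
  rw [chiS, Finset.abs_prod]
  exact Finset.prod_le_one (fun _ _ => abs_nonneg _) fun p hp => abs_chi_le (hS p hp) n

lemma chi_add {p : ℕ} {t : ℤ} (h : (p:ℤ) ∣ t) (n : ℤ) : chi p (n + t) = chi p n := by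
  unfold chi
  simp only [dvd_add_left h]

lemma chiS_add {S : Finset ℕ} {t : ℤ} (h : ∀ p ∈ S, (p:ℤ) ∣ t) (n : ℤ) :
    chiS S (n + t) = chiS S n :=
  Finset.prod_congr rfl fun p hp => chi_add (h p hp) n

lemma chi_sum {p : ℕ} (hp : p.Prime) {t : ℤ} (ht : ¬ (p:ℤ) ∣ t) (n : ℤ) :
    ∑ j ∈ Finset.range p, chi p (n + j * t) = 0 := by
  have hp1 : (1:ℝ) < p := by exact_mod_cast hp.one_lt
  have hp0 : (0:ℤ) < p := by exact_mod_cast hp.pos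
  have hpi : Prime (p:ℤ) := Nat.prime_iff_prime_int.1 hp
  have hcop : IsCoprime (p:ℤ) t := (Prime.coprime_iff_not_dvd hpi).2 ht
  obtain ⟨a, b, hab⟩ := hcop
  have hcard : ((Finset.range p).filter (fun j : ℕ => (p:ℤ) ∣ n + j * t)).card = 1 := by
    rw [Finset.card_eq_one]
    refine ⟨((-n * b) % p).toNat, ?_⟩
    have hnn : 0 ≤ (-n * b) % (p:ℤ) := Int.emod_nonneg _ hp0.ne'
    have hlt : (-n * b) % (p:ℤ) < p := Int.emod_lt_of_pos _ hp0
    have hj0 : (p:ℤ) ∣ n + ((-n * b) % (p:ℤ)) * t := by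
      rw [Int.emod_def]
      refine ⟨n * a - (-n * b / p) * t, ?_⟩
      linear_combination (-n) * hab
    ext j
    simp only [Finset.mem_filter, Finset.mem_range, Finset.mem_singleton]
    constructor
    · rintro ⟨hj, hd⟩
      have h1 : (p:ℤ) ∣ ((j:ℤ) - (-n * b) % (p:ℤ)) * t := by
        have e : ((j:ℤ) - (-n * b) % (p:ℤ)) * t = (n + j * t) - (n + ((-n * b) % (p:ℤ)) * t) := by ring
        rw [e]; exact dvd_sub hd hj0
      have h2 : (p:ℤ) ∣ (j:ℤ) - (-n * b) % (p:ℤ) := (hpi.dvd_or_dvd h1).resolve_right ht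
      have h3 : (j:ℤ) - (-n * b) % (p:ℤ) = 0 := by
        apply Int.eq_zero_of_abs_lt_dvd h2
        rw [abs_lt]; constructor <;> omega
      omega
    · rintro rfl
      refine ⟨by omega, ?_⟩
      rw [Int.toNat_of_nonneg hnn]; exact hj0
  have h1 : ∀ j : ℕ, chi p (n + j * t) = 1 / ((p:ℝ) - 1) -
      (if (p:ℤ) ∣ n + j * t then (1 + 1 / ((p:ℝ) - 1)) else 0) := by
    intro j; unfold chi; split_ifs <;> ring
  simp_rw [h1]
  rw [Finset.sum_sub_distrib, ← Finset.sum_filter, Finset.sum_const, Finset.sum_const, hcard,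
    Finset.card_range]
  have : (p:ℝ) - 1 ≠ 0 := by linarith
  simp only [nsmul_eq_mul]; field_simp; push_cast; ring

lemma shift_sum (G : ℤ → ℝ) (hG : ∀ n, |G n| ≤ 1) (a b : ℤ) (s : ℕ) :
    |∑ n ∈ Finset.Ico a b, G (n + s) - ∑ n ∈ Finset.Ico a b, G n| ≤ 2 * s := by
  rcases le_or_gt b a with hab | hab
  · simp [Finset.Ico_eq_empty_of_le hab]
  induction s with
  | zero => simp
  | succ s ih =>
    have h1 : ∑ n ∈ Finset.Ico a b, G (n + (s+1:ℕ)) + G (a + s) =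
        ∑ n ∈ Finset.Ico a b, G (n + s) + G (b + s) := by
      have e1 : ∑ n ∈ Finset.Ico a b, G (n + (s+1:ℕ)) = ∑ n ∈ Finset.Ico (a+1) (b+1), G (n + s) := by
        rw [← Finset.map_add_right_Ico a b 1, Finset.sum_map]
        refine Finset.sum_congr rfl fun n _ => ?_
        simp only [addRightEmbedding_apply]
        congr 1; push_cast; ring
      have e2 : Finset.Ico a (b+1) = insert a (Finset.Ico (a+1) (b+1)) := by
        ext x; simp only [Finset.mem_Ico, Finset.mem_insert]; omega
      have e3 : Finset.Ico a (b+1) = insert b (Finset.Ico a b) := by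
        ext x; simp only [Finset.mem_Ico, Finset.mem_insert]; omega
      have e4 : ∑ n ∈ Finset.Ico a (b+1), G (n+s) = G (a + s) + ∑ n ∈ Finset.Ico (a+1) (b+1), G (n + s) := by
        rw [e2, Finset.sum_insert (by simp)]
      have e5 : ∑ n ∈ Finset.Ico a (b+1), G (n+s) = G (b + s) + ∑ n ∈ Finset.Ico a b, G (n + s) := by
        rw [e3, Finset.sum_insert (by simp)]
      linarith
    have h2 := abs_le.1 ih
    have h3 := abs_le.1 (hG (a+s))
    have h4 := abs_le.1 (hG (b+s))
    rw [abs_le]; push_cast at h1 ⊢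
    constructor <;> linarith [h2.1, h2.2, h3.1, h3.2, h4.1, h4.2]

lemma periodic_cancel (G : ℤ → ℝ) (hG : ∀ n, |G n| ≤ 1) (p t : ℕ) (hp : 0 < p)
    (h0 : ∀ n : ℤ, ∑ j ∈ Finset.range p, G (n + j * t) = 0) (a b : ℤ) :
    |∑ n ∈ Finset.Ico a b, G n| ≤ 2 * (p * t) := by
  have h1 : ∑ j ∈ Finset.range p, (∑ n ∈ Finset.Ico a b, G (n + ((j * t : ℕ):ℤ))
      - ∑ n ∈ Finset.Ico a b, G n) = - (p * ∑ n ∈ Finset.Ico a b, G n) := by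
    rw [Finset.sum_sub_distrib, Finset.sum_comm]
    push_cast
    simp [h0]
  have h2 : |p * ∑ n ∈ Finset.Ico a b, G n| ≤ p * (2 * (p * t)) := by
    rw [← abs_neg, ← h1]
    refine (Finset.abs_sum_le_sum_abs _ _).trans ?_
    calc _ ≤ ∑ j ∈ Finset.range p, (2 * ((p:ℝ) * t)) := by
          refine Finset.sum_le_sum fun j hj => ?_
          refine (shift_sum G hG a b _).trans ?_
          have : (j:ℝ) ≤ p := by exact_mod_cast (Finset.mem_range.1 hj).le
          push_cast
          gcongr
      _ = _ := by simp
  rw [abs_mul, Nat.abs_cast] at h2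
  exact le_of_mul_le_mul_left h2 (by exact_mod_cast hp)

lemma corr_aux {S S' : Finset ℕ} (hS : ∀ p ∈ S, p.Prime) (hS' : ∀ p ∈ S', p.Prime)
    {p : ℕ} (hp : p ∈ S) (hp' : p ∉ S') (z w a b : ℤ) :
    |∑ n ∈ Finset.Ico a b, chiS S (n + z) * chiS S' (n + w)| ≤ 2 * (mS S * mS S') := by
  have hpp := hS p hp
  have hmul : mS S = p * mS (S.erase p) := (Finset.mul_prod_erase S (fun q => q) hp).symm
  have key := periodic_cancel (fun n => chiS S (n + z) * chiS S' (n + w)) (by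
    intro n
    rw [abs_mul]
    exact mul_le_one₀ (abs_chiS_le hS _) (abs_nonneg _) (abs_chiS_le hS' _)) p
    (mS (S.erase p) * mS S') hpp.pos (by
      intro n
      set t : ℤ := ((mS (S.erase p) * mS S' : ℕ) : ℤ) with ht
      have h1 : ∀ j : ℕ, chiS S (n + j * t + z) * chiS S' (n + j * t + w) =
          chi p ((n + z) + j * t) * (chiS (S.erase p) (n + z) * chiS S' (n + w)) := by
        intro j
        have e1 : chiS S (n + j * t + z) = chi p ((n+z) + j * t) * chiS (S.erase p) ((n+z) + j*t) := by
          rw [chiS, chiS, show n + j * t + z = (n+z) + j * t by ring, Finset.mul_prod_erase S (fun q => chi q _) hp]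
        have e2 : chiS (S.erase p) ((n+z) + j*t) = chiS (S.erase p) (n+z) := by
          apply chiS_add
          intro q hq
          apply Dvd.dvd.mul_left
          rw [ht]
          exact_mod_cast Dvd.dvd.mul_right (Finset.dvd_prod_of_mem (fun q => q) hq) _
        have e3 : chiS S' (n + j * t + w) = chiS S' (n + w) := by
          rw [show n + j * t + w = (n + w) + j * t by ring]
          apply chiS_add
          intro q hq
          apply Dvd.dvd.mul_left
          rw [ht]
          exact_mod_cast Dvd.dvd.mul_left (Finset.dvd_prod_of_mem (fun q => q) hq) _
        rw [e1, e2, e3]; ring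
      simp_rw [h1]
      rw [← Finset.sum_mul, chi_sum hpp, zero_mul]
      rw [ht]
      intro hd
      have hd' : p ∣ mS (S.erase p) * mS S' := by exact_mod_cast hd
      have aux : ∀ R : Finset ℕ, (∀ q ∈ R, q.Prime) → p ∉ R → ¬ p ∣ mS R := by
        intro R hR hpR hdR
        obtain ⟨q, hq, hpq⟩ := (Prime.dvd_finsetProd_iff hpp.prime _).1 hdR
        rw [(Nat.prime_dvd_prime_iff_eq hpp (hR q hq)).1 hpq] at hpR
        exact hpR hq
      rcases hpp.dvd_mul.1 hd' with h | h
      · exact aux _ (fun q hq => hS q (Finset.mem_of_mem_erase hq)) (Finset.notMem_erase p S) h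
      · exact aux _ hS' hp' h) a b
  refine key.trans (le_of_eq ?_)
  rw [hmul]; push_cast; ring

lemma corr {S S' : Finset ℕ} (hS : ∀ p ∈ S, p.Prime) (hS' : ∀ p ∈ S', p.Prime)
    (hne : S ≠ S') (z w a b : ℤ) :
    |∑ n ∈ Finset.Ico a b, chiS S (n + z) * chiS S' (n + w)| ≤ 2 * (mS S * mS S') := by
  by_cases h : S ⊆ S'
  · have : ¬ S' ⊆ S := fun h' => hne (Finset.Subset.antisymm h h')
    obtain ⟨p, hp, hp'⟩ := Finset.not_subset.1 this
    have := corr_aux hS' hS hp hp' w z a b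
    simp_rw [mul_comm (chiS S' _)] at this
    linarith [mul_comm (mS S : ℝ) (mS S')]
  · obtain ⟨p, hp, hp'⟩ := Finset.not_subset.1 h
    exact corr_aux hS hS' hp hp' z w a b

/-- bilinear form bound -/
lemma bilin {S S' : Finset ℕ} (hS : ∀ p ∈ S, p.Prime) (hS' : ∀ p ∈ S', p.Prime)
    (hne : S ≠ S') (N : ℕ) (F : ℤ → ℝ) (c : ℝ) (hF : ∀ z, |F z| ≤ c) :
    |∑ n ∈ Finset.range N, ∑ m ∈ Finset.range N, chiS S n * chiS S' m * F ((m:ℤ) - n)|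
      ≤ 4 * (mS S * mS S') * N * c := by
  have hc : 0 ≤ c := (abs_nonneg _).trans (hF 0)
  rw [← Finset.sum_product']
  have hmaps : ∀ x ∈ Finset.range N ×ˢ Finset.range N,
      ((x.2:ℤ) - x.1) ∈ Finset.Ico (-(N:ℤ)) N := by
    intro x hx
    rw [Finset.mem_product, Finset.mem_range, Finset.mem_range] at hx
    rw [Finset.mem_Ico]; constructor <;> omega
  rw [← Finset.sum_fiberwise_of_maps_to hmaps]
  refine (Finset.abs_sum_le_sum_abs _ _).trans ?_
  have h1 : ∀ z ∈ Finset.Ico (-(N:ℤ)) N,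
      |∑ x ∈ (Finset.range N ×ˢ Finset.range N).filter (fun x : ℕ × ℕ => (x.2:ℤ) - x.1 = z),
        chiS S x.1 * chiS S' x.2 * F ((x.2:ℤ) - x.1)| ≤ 2 * (mS S * mS S') * c := by
    intro z _
    have h2 : ∑ x ∈ (Finset.range N ×ˢ Finset.range N).filter (fun x : ℕ × ℕ => (x.2:ℤ) - x.1 = z),
        chiS S x.1 * chiS S' x.2 * F ((x.2:ℤ) - x.1) =
        (∑ n ∈ Finset.Ico (max 0 (-z)) (min (N:ℤ) (N - z)), chiS S (n + 0) * chiS S' (n + z)) * F z := by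
      rw [Finset.sum_mul]
      refine Finset.sum_nbij' (fun x => (x.1:ℤ)) (fun n => (n.toNat, (n + z).toNat)) ?_ ?_ ?_ ?_ ?_
      · intro x hx
        simp only [Finset.mem_filter, Finset.mem_product, Finset.mem_range] at hx
        simp only [Finset.mem_Ico]; constructor <;> omega
      · intro n hn
        simp only [Finset.mem_Ico] at hn
        simp only [Finset.mem_filter, Finset.mem_product, Finset.mem_range]
        refine ⟨⟨?_, ?_⟩, ?_⟩ <;> omega
      · intro x hx
        simp only [Finset.mem_filter, Finset.mem_product, Finset.mem_range] at hx
        ext <;> simp only <;> omega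
      · intro n hn
        simp only [Finset.mem_Ico] at hn
        simp only; omega
      · intro x hx
        simp only [Finset.mem_filter, Finset.mem_product, Finset.mem_range] at hx
        rw [hx.2, add_zero, ← hx.2]; congr 3; ring
    rw [h2, abs_mul]
    exact mul_le_mul (corr hS hS' hne _ _ _ _) (hF z) (abs_nonneg _) (by positivity)
  refine (Finset.sum_le_sum h1).trans (le_of_eq ?_)
  rw [Finset.sum_const, Int.card_Ico, nsmul_eq_mul]
  have : (((N:ℤ) - -(N:ℤ)).toNat : ℝ) = 2 * N := by
    have : ((N:ℤ) - -(N:ℤ)).toNat = 2 * N := by omega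
    rw [this]; push_cast; ring
  rw [this]; ring

end PrimeMax

namespace PrimeMax
open Finset

lemma card_dvd_le (N d : ℕ) (hd : 0 < d) (hdN : d ≤ N) :
    (((Finset.range N).filter (fun n => d ∣ n)).card : ℝ) ≤ 2 * N / d := by
  have h1 : ((Finset.range N).filter (fun n => d ∣ n)).card ≤ N / d + 1 := by
    rw [← Finset.card_range (N / d + 1)]
    refine Finset.card_le_card_of_injOn (fun n => n / d) ?_ ?_
    · intro n hn
      simp only [Finset.coe_filter, Finset.mem_range, Set.mem_ofPred_eq] at hn
      simp only [Finset.coe_range, Set.mem_Iio]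
      exact Nat.lt_succ_of_le (Nat.div_le_div_right hn.1.le)
    · intro n hn m hm h
      simp only [Finset.coe_filter, Finset.mem_range, Set.mem_ofPred_eq] at hn hm
      exact Nat.div_left_inj hn.2 hm.2 |>.1 h
  have h2 : ((N / d : ℕ) : ℝ) ≤ N / d := Nat.cast_div_le
  have hd' : (0:ℝ) < d := by exact_mod_cast hd
  have h3 : (1:ℝ) ≤ N / d := by rw [one_le_div hd']; exact_mod_cast hdN
  calc _ ≤ ((N / d + 1 : ℕ) : ℝ) := by exact_mod_cast h1
    _ ≤ (N:ℝ)/d + N / d := by push_cast; linarith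
    _ = _ := by ring

lemma X_bound {S : Finset ℕ} (hS : ∀ p ∈ S, p.Prime) (N : ℕ) (hN : mS S ≤ N) :
    ∑ n ∈ Finset.range N, |chiS S n| ≤ 2 * N * 4 ^ S.card / mS S := by
  have h0 : ∀ p ∈ S, ∀ n : ℕ, |chi p n| ≤ (if p ∣ n then 1 else 0) + 2 / (p:ℝ) := by
    intro p hp n
    have h2 : (2:ℝ) ≤ p := by exact_mod_cast (hS p hp).two_le
    unfold chi
    simp only [Int.natCast_dvd_natCast]
    split_ifs
    · simp; positivity
    · rw [abs_of_nonneg (by apply div_nonneg <;> linarith), zero_add, div_le_div_iff₀ (by linarith) (by linarith)]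
      linarith
  have h1 : ∀ n : ℕ, |chiS S n| ≤ ∑ U ∈ S.powerset, (if mS U ∣ n then 1 else 0) * ∏ p ∈ S \ U, 2 / (p:ℝ) := by
    intro n
    rw [chiS, Finset.abs_prod]
    refine (Finset.prod_le_prod (fun _ _ => abs_nonneg _) (fun p hp => h0 p hp n)).trans ?_
    rw [Finset.prod_add]
    refine Finset.sum_le_sum fun U hU => ?_
    have hnn : 0 ≤ ∏ p ∈ S \ U, 2 / (p:ℝ) := Finset.prod_nonneg fun _ _ => by positivity
    refine mul_le_mul_of_nonneg_right ?_ hnn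
    by_cases h : ∀ p ∈ U, p ∣ n
    · have : mS U ∣ n := by
        apply Finset.prod_primes_dvd
        · intro p hp; exact (hS p (Finset.mem_powerset.1 hU hp)).prime
        · exact h
      rw [if_pos this]
      exact Finset.prod_le_one (fun _ _ => by split_ifs <;> norm_num) (fun _ _ => by split_ifs <;> norm_num)
    · push Not at h
      obtain ⟨p, hp, hpn⟩ := h
      rw [Finset.prod_eq_zero hp (by rw [if_neg hpn])]
      split_ifs <;> norm_num
  refine (Finset.sum_le_sum fun n _ => h1 n).trans ?_
  rw [Finset.sum_comm]
  have hm : (0:ℝ) < mS S := by exact_mod_cast mS_pos hS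
  have h3 : ∀ U ∈ S.powerset, ∑ n ∈ Finset.range N, (if mS U ∣ n then (1:ℝ) else 0) * ∏ p ∈ S \ U, 2 / (p:ℝ)
      ≤ 2 * N * 2 ^ S.card / mS S := by
    intro U hU
    have hUS := Finset.mem_powerset.1 hU
    have hUp := mS_pos (S := U) fun p hp => hS p (hUS hp)
    have hnn : 0 ≤ ∏ p ∈ S \ U, 2 / (p:ℝ) := Finset.prod_nonneg fun _ _ => by positivity
    have hprod : mS (S \ U) * mS U = mS S := Finset.prod_sdiff hUS
    have hUN : mS U ≤ N := by
      exact le_trans (Nat.le_of_dvd (mS_pos hS) (hprod ▸ Dvd.intro_left _ rfl)) hN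
    rw [← Finset.sum_mul, ← Finset.sum_filter, Finset.sum_const, nsmul_eq_mul, mul_one]
    refine (mul_le_mul_of_nonneg_right (card_dvd_le N _ hUp hUN) hnn).trans ?_
    rw [Finset.prod_div_distrib, Finset.prod_const]
    have e : ∏ p ∈ S \ U, (p:ℝ) = mS (S \ U) := by rw [mS]; push_cast; rfl
    rw [e, div_mul_div_comm]
    have e2 : (mS U : ℝ) * mS (S \ U) = mS S := by rw [← hprod]; push_cast; ring
    rw [e2]
    gcongr
    · norm_num
    · exact Finset.sdiff_subset
  refine (Finset.sum_le_sum h3).trans (le_of_eq ?_)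
  rw [Finset.sum_const, Finset.card_powerset, nsmul_eq_mul]
  push_cast
  have : (4:ℝ) ^ S.card = 2 ^ S.card * 2 ^ S.card := by rw [← mul_pow]; norm_num
  rw [this]; ring

/-- quadrilinear form -/
noncomputable def WW (N : ℕ) (F : ℤ → ℝ) (a b c d : ℤ → ℝ) : ℝ :=
  ∑ x ∈ Finset.range N ×ˢ Finset.range N ×ˢ Finset.range N ×ˢ Finset.range N,
    a x.1 * b x.2.1 * c x.2.2.1 * d x.2.2.2 * F ((x.2.1:ℤ) - x.1 - x.2.2.2 + x.2.2.1)

lemma WW_eq (N : ℕ) (F : ℤ → ℝ) (a b c d : ℤ → ℝ) : WW N F a b c d = 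
  ∑ n ∈ Finset.range N, ∑ m ∈ Finset.range N, ∑ k ∈ Finset.range N, ∑ l ∈ Finset.range N,
    a n * b m * c k * d l * F ((m:ℤ) - n - l + k) := by
  unfold WW
  simp only [Finset.sum_product]

lemma WW_12 (N : ℕ) (F : ℤ → ℝ) (a b c d : ℤ → ℝ) : WW N F a b c d = 
  ∑ k ∈ Finset.range N, ∑ l ∈ Finset.range N, ∑ n ∈ Finset.range N, ∑ m ∈ Finset.range N,
    a n * b m * (fun z => c k * (d l * F (z - l + k))) ((m:ℤ) - n) := by
  rw [WW_eq]
  have : ∀ f : ℕ → ℕ → ℕ → ℕ → ℝ, ∑ n ∈ Finset.range N, ∑ m ∈ Finset.range N, ∑ k ∈ Finset.range N, ∑ l ∈ Finset.range N, f n m k l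
    = ∑ k ∈ Finset.range N, ∑ l ∈ Finset.range N, ∑ n ∈ Finset.range N, ∑ m ∈ Finset.range N, f n m k l := by
    intro f
    simp_rw [← Finset.sum_product' (s := Finset.range N) (t := Finset.range N)]
    rw [Finset.sum_comm]
  rw [this]
  refine Finset.sum_congr rfl fun n _ => Finset.sum_congr rfl fun m _ => Finset.sum_congr rfl fun k _ => Finset.sum_congr rfl fun l _ => ?_
  simp only
  ring

lemma WW_34 (N : ℕ) (F : ℤ → ℝ) (a b c d : ℤ → ℝ) : WW N F a b c d = 
  ∑ n ∈ Finset.range N, ∑ m ∈ Finset.range N, ∑ k ∈ Finset.range N, ∑ l ∈ Finset.range N,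
    c k * d l * (fun z => a n * (b m * F (-z + m - n))) ((l:ℤ) - k) := by
  rw [WW_eq]
  refine Finset.sum_congr rfl fun n _ => Finset.sum_congr rfl fun m _ => Finset.sum_congr rfl fun k _ => Finset.sum_congr rfl fun l _ => ?_
  simp only
  rw [show (m:ℤ) - n - l + k = -((l:ℤ) - k) + m - n by ring]; ring

lemma WW_24 (N : ℕ) (F : ℤ → ℝ) (a b c d : ℤ → ℝ) : WW N F a b c d = 
  ∑ n ∈ Finset.range N, ∑ k ∈ Finset.range N, ∑ m ∈ Finset.range N, ∑ l ∈ Finset.range N,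
    b m * d l * (fun z => a n * (c k * F (-z + k - n))) ((l:ℤ) - m) := by
  rw [WW_eq]
  refine Finset.sum_congr rfl fun n _ => ?_
  rw [Finset.sum_comm]
  refine Finset.sum_congr rfl fun k _ => Finset.sum_congr rfl fun m _ => Finset.sum_congr rfl fun l _ => ?_
  simp only
  rw [show (m:ℤ) - n - l + k = -((l:ℤ) - m) + k - n by ring]; ring

lemma sum_abs_le_card {ι : Type*} (s : Finset ι) (g : ι → ℝ) (c : ℝ) (h : ∀ i ∈ s, |g i| ≤ c) :
    |∑ i ∈ s, g i| ≤ s.card * c := by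
  refine (Finset.abs_sum_le_sum_abs _ _).trans ((Finset.sum_le_sum h).trans ?_)
  simp

lemma abs_mul_le_c {x y c : ℝ} (hx : |x| ≤ 1) (hy : |y| ≤ c) : |x * y| ≤ c := by
  rw [abs_mul]
  calc _ ≤ 1 * |y| := by gcongr
    _ ≤ c := by linarith

lemma bilin' {S S' : Finset ℕ} (hS : ∀ p ∈ S, p.Prime) (hS' : ∀ p ∈ S', p.Prime) (D : ℕ)
    (hSD : mS S ≤ D) (hSD' : mS S' ≤ D) (hne : S ≠ S') (N : ℕ) (c : ℝ) (hc : 0 ≤ c)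
    (G : ℕ → ℕ → ℤ → ℝ) (hG : ∀ i j z, |G i j z| ≤ c) :
    |∑ i ∈ Finset.range N, ∑ j ∈ Finset.range N,
      ∑ n ∈ Finset.range N, ∑ m ∈ Finset.range N, chiS S n * chiS S' m * G i j ((m:ℤ) - n)|
      ≤ 4 * D^2 * N ^ 3 * c := by
  refine (sum_abs_le_card _ _ (N * (4 * D^2 * N * c)) (fun n hn => ?_)).trans (le_of_eq ?_)
  · refine (sum_abs_le_card _ _ (4 * D^2 * N * c) (fun m hm => ?_)).trans (le_of_eq ?_)
    · refine (bilin hS hS' hne N _ c (hG n m)).trans ?_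
      have : ((mS S:ℝ) * mS S') ≤ D ^ 2 := by
        rw [sq]; gcongr
      gcongr
    · rw [Finset.card_range]
  · rw [Finset.card_range]; ring

lemma WW_offdiag {S1 S2 S3 S4 : Finset ℕ} (h1 : ∀ p ∈ S1, p.Prime) (h2 : ∀ p ∈ S2, p.Prime)
    (h3 : ∀ p ∈ S3, p.Prime) (h4 : ∀ p ∈ S4, p.Prime) (D : ℕ) (hD1 : mS S1 ≤ D) (hD2 : mS S2 ≤ D)
    (hD3 : mS S3 ≤ D) (hD4 : mS S4 ≤ D) (N : ℕ) (F : ℤ → ℝ) (c : ℝ) (hF : ∀ z, |F z| ≤ c)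
    (hne : ¬ (S1 = S2 ∧ S3 = S4 ∧ S2 = S4)) :
    |WW N F (chiS S1) (chiS S2) (chiS S3) (chiS S4)| ≤ 4 * D ^ 2 * N ^ 3 * c := by
  have hc : 0 ≤ c := (abs_nonneg _).trans (hF 0)
  have b1 := abs_chiS_le h1
  have b2 := abs_chiS_le h2
  have b3 := abs_chiS_le h3
  have b4 := abs_chiS_le h4
  by_cases e1 : S1 = S2
  · by_cases e2 : S3 = S4
    · have e3 : S2 ≠ S4 := fun e => hne ⟨e1, e2, e⟩
      rw [WW_24]
      exact bilin' h2 h4 D hD2 hD4 e3 N c hc (fun i j z => chiS S1 i * (chiS S3 j * F (-z + j - i))) 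
        fun i j z => abs_mul_le_c (b1 i) (abs_mul_le_c (b3 j) (hF _))
    · rw [WW_34]
      exact bilin' h3 h4 D hD3 hD4 e2 N c hc (fun i j z => chiS S1 i * (chiS S2 j * F (-z + j - i))) 
        fun i j z => abs_mul_le_c (b1 i) (abs_mul_le_c (b2 j) (hF _))
  · rw [WW_12]
    exact bilin' h1 h2 D hD1 hD2 e1 N c hc (fun i j z => chiS S3 i * (chiS S4 j * F (z - j + i))) 
        fun i j z => abs_mul_le_c (b3 i) (abs_mul_le_c (b4 j) (hF _))

lemma sum4 (s : Finset ℕ) (x : ℕ → ℝ) :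
    ∑ n ∈ s, ∑ m ∈ s, ∑ k ∈ s, ∑ l ∈ s, x n * (x m * (x k * x l)) = (∑ n ∈ s, x n) ^ 4 := by
  have : ∀ y : ℕ → ℝ, ∀ c, ∑ n ∈ s, c * y n = c * ∑ n ∈ s, y n := fun y c => (Finset.mul_sum _ _ _).symm
  simp only [this]
  simp only [← Finset.sum_mul]
  ring

lemma WW_diag (S : Finset ℕ) (N : ℕ) (F : ℤ → ℝ) (c : ℝ) (hF : ∀ z, |F z| ≤ c) :
    |WW N F (chiS S) (chiS S) (chiS S) (chiS S)| ≤ c * (∑ n ∈ Finset.range N, |chiS S n|) ^ 4 := by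
  have hc : 0 ≤ c := (abs_nonneg _).trans (hF 0)
  have e := sum4 (Finset.range N) (fun n => |chiS S n|)
  rw [← e, WW_eq]
  simp only [Finset.mul_sum]
  refine (Finset.abs_sum_le_sum_abs _ _).trans (Finset.sum_le_sum fun n _ => ?_)
  refine (Finset.abs_sum_le_sum_abs _ _).trans (Finset.sum_le_sum fun m _ => ?_)
  refine (Finset.abs_sum_le_sum_abs _ _).trans (Finset.sum_le_sum fun k _ => ?_)
  refine (Finset.abs_sum_le_sum_abs _ _).trans (Finset.sum_le_sum fun l _ => ?_)
  simp only [abs_mul]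
  calc _ ≤ |chiS S n| * |chiS S m| * |chiS S k| * |chiS S l| * c := by gcongr; exact hF _
    _ = _ := by ring

lemma WW_expand {ι : Type*} (𝓢 : Finset ι) (N : ℕ) (F : ℤ → ℝ) (B : ι → ℝ) (g : ι → ℤ → ℝ) :
    WW N F (fun n => ∑ S ∈ 𝓢, B S * g S n) (fun n => ∑ S ∈ 𝓢, B S * g S n)
      (fun n => ∑ S ∈ 𝓢, B S * g S n) (fun n => ∑ S ∈ 𝓢, B S * g S n) =
    ∑ s1 ∈ 𝓢, ∑ s2 ∈ 𝓢, ∑ s3 ∈ 𝓢, ∑ s4 ∈ 𝓢, B s1 * B s2 * B s3 * B s4 *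
      WW N F (g s1) (g s2) (g s3) (g s4) := by
  have l1 : ∀ b c d, WW N F (fun n => ∑ S ∈ 𝓢, B S * g S n) b c d = ∑ s ∈ 𝓢, B s * WW N F (g s) b c d := by
    intro b c d
    unfold WW
    simp_rw [Finset.mul_sum, Finset.sum_mul]
    rw [Finset.sum_comm]
    exact Finset.sum_congr rfl fun s _ => Finset.sum_congr rfl fun x _ => by ring
  have l2 : ∀ b c d, WW N F b (fun n => ∑ S ∈ 𝓢, B S * g S n) c d = ∑ s ∈ 𝓢, B s * WW N F b (g s) c d := by
    intro b c d
    unfold WW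
    simp_rw [Finset.mul_sum, Finset.sum_mul]
    rw [Finset.sum_comm]
    exact Finset.sum_congr rfl fun s _ => Finset.sum_congr rfl fun x _ => by ring
  have l3 : ∀ b c d, WW N F b c (fun n => ∑ S ∈ 𝓢, B S * g S n) d = ∑ s ∈ 𝓢, B s * WW N F b c (g s) d := by
    intro b c d
    unfold WW
    simp_rw [Finset.mul_sum, Finset.sum_mul]
    rw [Finset.sum_comm]
    exact Finset.sum_congr rfl fun s _ => Finset.sum_congr rfl fun x _ => by ring
  have l4 : ∀ b c d, WW N F b c d (fun n => ∑ S ∈ 𝓢, B S * g S n) = ∑ s ∈ 𝓢, B s * WW N F b c d (g s) := by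
    intro b c d
    unfold WW
    simp_rw [Finset.mul_sum, Finset.sum_mul]
    rw [Finset.sum_comm]
    exact Finset.sum_congr rfl fun s _ => Finset.sum_congr rfl fun x _ => by ring
  rw [l1]
  refine Finset.sum_congr rfl fun s1 _ => ?_
  rw [l2, Finset.mul_sum]
  refine Finset.sum_congr rfl fun s2 _ => ?_
  rw [l3, Finset.mul_sum, Finset.mul_sum]
  refine Finset.sum_congr rfl fun s3 _ => ?_
  rw [l4, Finset.mul_sum, Finset.mul_sum, Finset.mul_sum]
  refine Finset.sum_congr rfl fun s4 _ => ?_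
  ring

lemma mS_inj {S S' : Finset ℕ} (hS : ∀ p ∈ S, p.Prime) (hS' : ∀ p ∈ S', p.Prime) (h : mS S = mS S') :
    S = S' := by
  rw [← Nat.primeFactors_prod hS, ← Nat.primeFactors_prod hS']
  exact congrArg _ h

lemma card_family (𝓢 : Finset (Finset ℕ)) (D : ℕ) (hp : ∀ S ∈ 𝓢, ∀ p ∈ S, p.Prime)
    (hD : ∀ S ∈ 𝓢, mS S ≤ D) : 𝓢.card ≤ D := by
  rw [show D = (Finset.Icc 1 D).card by simp]
  refine Finset.card_le_card_of_injOn mS ?_ ?_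
  · intro S hS
    rw [Finset.mem_coe, Finset.mem_Icc]
    exact ⟨mS_pos (hp S hS), hD S hS⟩
  · intro S hS S' hS' h
    exact mS_inj (hp S hS) (hp S' hS') h

lemma four_pow_le {S : Finset ℕ} (hS : ∀ p ∈ S, p.Prime) : 4 ^ S.card ≤ mS S ^ 2 := by
  rw [mS, ← Finset.prod_pow, ← Finset.prod_const]
  refine Finset.prod_le_prod' fun p hp => ?_
  nlinarith [(hS p hp).two_le]

lemma WW_bound (𝓢 : Finset (Finset ℕ)) (D N : ℕ) (B : Finset ℕ → ℝ)
    (hp : ∀ S ∈ 𝓢, ∀ p ∈ S, p.Prime) (hD : ∀ S ∈ 𝓢, mS S ≤ D) (hDN : D ≤ N)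
    (hB : ∀ S ∈ 𝓢, |B S| ≤ 4 ^ S.card) (F : ℤ → ℝ) (c : ℝ) (hF : ∀ z, |F z| ≤ c)  :
    |WW N F (fun n => ∑ S ∈ 𝓢, B S * chiS S n) (fun n => ∑ S ∈ 𝓢, B S * chiS S n)
      (fun n => ∑ S ∈ 𝓢, B S * chiS S n) (fun n => ∑ S ∈ 𝓢, B S * chiS S n)| ≤
    c * (4 * D ^ 14 * N ^ 3 + 16 * N ^ 4 * ∑ S ∈ 𝓢, 65536 ^ S.card / (mS S : ℝ) ^ 4) := by
  have hc : 0 ≤ c := (abs_nonneg _).trans (hF 0)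
  rw [WW_expand]
  have hB2 : ∀ S ∈ 𝓢, |B S| ≤ (D:ℝ) ^ 2 := by
    intro S hS
    refine (hB S hS).trans ?_
    have h1 := four_pow_le (hp S hS)
    have h2 : mS S ^ 2 ≤ D ^ 2 := Nat.pow_le_pow_left (hD S hS) 2
    exact_mod_cast h1.trans h2
  have key : ∀ s1 ∈ 𝓢, ∀ s2 ∈ 𝓢, ∀ s3 ∈ 𝓢, ∀ s4 ∈ 𝓢,
      |B s1 * B s2 * B s3 * B s4 * WW N F (chiS s1) (chiS s2) (chiS s3) (chiS s4)| ≤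
      4 * D ^ 10 * N ^ 3 * c + (if s3 = s4 then (if s2 = s4 then (if s1 = s2 then 
        16 * N ^ 4 * c * (65536 ^ s1.card / (mS s1 : ℝ) ^ 4) else 0) else 0) else 0) := by
    intro s1 m1 s2 m2 s3 m3 s4 m4
    by_cases hne : s1 = s2 ∧ s3 = s4 ∧ s2 = s4
    · obtain ⟨e1, e2, e3⟩ := hne
      subst e1; subst e2; subst e3
      rw [if_pos rfl, if_pos rfl, if_pos rfl]
      have hx := X_bound (hp s1 m1) N ((hD s1 m1).trans hDN)
      have hw := WW_diag s1 N F c hF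
      have hxn : 0 ≤ ∑ n ∈ Finset.range N, |chiS s1 n| := Finset.sum_nonneg fun _ _ => abs_nonneg _
      rw [abs_mul, abs_mul, abs_mul, abs_mul]
      have hb := hB s1 m1
      calc _ ≤ (4:ℝ) ^ s1.card * 4 ^ s1.card * 4 ^ s1.card * 4 ^ s1.card * 
            (c * (2 * N * 4 ^ s1.card / mS s1) ^ 4) := by
              gcongr
              exact hw.trans (by gcongr)
        _ = 16 * N ^ 4 * c * (((4:ℝ) ^ s1.card) ^ 8 / (mS s1 : ℝ) ^ 4) := by ring
        _ = 16 * N ^ 4 * c * (65536 ^ s1.card / (mS s1 : ℝ) ^ 4) := by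
              rw [← pow_mul, mul_comm, mul_comm s1.card, pow_mul]; norm_num; ring
        _ ≤ _ := by
              have : 0 ≤ 4 * (D:ℝ) ^ 10 * N ^ 3 * c := by positivity
              linarith
    · have hw := WW_offdiag (hp s1 m1) (hp s2 m2) (hp s3 m3) (hp s4 m4) D (hD _ m1) (hD _ m2) (hD _ m3)
        (hD _ m4) N F c hF hne
      rw [abs_mul, abs_mul, abs_mul, abs_mul]
      calc _ ≤ (D:ℝ)^2 * D^2 * D^2 * D^2 * (4 * D ^ 2 * N ^ 3 * c) := by
            gcongr
            · exact hB2 _ m1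
            · exact hB2 _ m2
            · exact hB2 _ m3
            · exact hB2 _ m4
        _ = 4 * D ^ 10 * N ^ 3 * c := by ring
        _ ≤ _ := by
            have : (0:ℝ) ≤ (if s3 = s4 then (if s2 = s4 then (if s1 = s2 then 
              16 * N ^ 4 * c * (65536 ^ s1.card / (mS s1 : ℝ) ^ 4) else 0) else 0) else 0) := by
              split_ifs <;> positivity
            linarith
  have hcard : (𝓢.card : ℝ) ≤ D := by exact_mod_cast card_family 𝓢 D hp hD
  calc _ ≤ ∑ s1 ∈ 𝓢, ∑ s2 ∈ 𝓢, ∑ s3 ∈ 𝓢, ∑ s4 ∈ 𝓢, (4 * D ^ 10 * N ^ 3 * c + (if s3 = s4 then (if s2 = s4 then (if s1 = s2 then 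
        16 * N ^ 4 * c * (65536 ^ s1.card / (mS s1 : ℝ) ^ 4) else 0) else 0) else 0)) := by
        refine (Finset.abs_sum_le_sum_abs _ _).trans (Finset.sum_le_sum fun s1 m1 => ?_)
        refine (Finset.abs_sum_le_sum_abs _ _).trans (Finset.sum_le_sum fun s2 m2 => ?_)
        refine (Finset.abs_sum_le_sum_abs _ _).trans (Finset.sum_le_sum fun s3 m3 => ?_)
        refine (Finset.abs_sum_le_sum_abs _ _).trans (Finset.sum_le_sum fun s4 m4 => ?_)
        exact key s1 m1 s2 m2 s3 m3 s4 m4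
    _ = 𝓢.card ^ 4 * (4 * D ^ 10 * N ^ 3 * c) + 
        ∑ s1 ∈ 𝓢, 16 * N ^ 4 * c * (65536 ^ s1.card / (mS s1 : ℝ) ^ 4) := by
        simp only [Finset.sum_add_distrib, Finset.sum_const, nsmul_eq_mul]
        congr 1
        · ring
        · refine Finset.sum_congr rfl fun s1 m1 => ?_
          calc _ = ∑ s2 ∈ 𝓢, ∑ s3 ∈ 𝓢, (if s2 = s3 then (if s1 = s2 then 
              16 * N ^ 4 * c * (65536 ^ s1.card / (mS s1 : ℝ) ^ 4) else 0) else 0) := by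
                refine Finset.sum_congr rfl fun s2 m2 => Finset.sum_congr rfl fun s3 m3 => ?_
                rw [Finset.sum_ite_eq, if_pos m3]
            _ = ∑ s2 ∈ 𝓢, (if s1 = s2 then 
              16 * N ^ 4 * c * (65536 ^ s1.card / (mS s1 : ℝ) ^ 4) else 0) := by
                refine Finset.sum_congr rfl fun s2 m2 => ?_
                rw [Finset.sum_ite_eq, if_pos m2]
            _ = _ := by rw [Finset.sum_ite_eq, if_pos m1]
    _ ≤ (D:ℝ) ^ 4 * (4 * D ^ 10 * N ^ 3 * c) + 
        ∑ s1 ∈ 𝓢, 16 * N ^ 4 * c * (65536 ^ s1.card / (mS s1 : ℝ) ^ 4) := by gcongr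
    _ = _ := by rw [← Finset.mul_sum]; ring

end PrimeMax

namespace PrimeMax
open Finset

/-- Sum of `n^{-3/2}` -/
noncomputable def Z32 : ℝ := ∑' n : ℕ, 1 / (n:ℝ) ^ (3/2 : ℝ)

lemma sqrt_cube (n : ℕ) : Real.sqrt n ^ 3 = (n:ℝ) ^ (3/2 : ℝ) := by
  rw [Real.sqrt_eq_rpow, ← Real.rpow_natCast, ← Real.rpow_mul (by positivity)]; norm_num

lemma sum32 (P : Finset ℕ) : ∑ p ∈ P, 1 / Real.sqrt p ^ 3 ≤ Z32 := by
  simp_rw [sqrt_cube]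
  exact (Real.summable_one_div_nat_rpow.2 (by norm_num)).sum_le_tsum P (fun _ _ => by positivity)

noncomputable def C1 : ℝ := Real.exp (65536 * Z32)

lemma C1_pos : 0 < C1 := Real.exp_pos _

lemma rankin (𝓢 : Finset (Finset ℕ)) (t : ℕ) (ht : 1 ≤ t) 
    (hp : ∀ S ∈ 𝓢, ∀ p ∈ S, p.Prime) (hm : ∀ S ∈ 𝓢, t ^ 4 ≤ mS S) :
    ∑ S ∈ 𝓢, 65536 ^ S.card / (mS S : ℝ) ^ 4 ≤ C1 / (t:ℝ) ^ 10 := by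
  have h1 : ∀ S ∈ 𝓢, 65536 ^ S.card / (mS S : ℝ) ^ 4 ≤ (1 / (t:ℝ)^10) * ∏ p ∈ S, (65536 / Real.sqrt p ^ 3) := by
    intro S hS
    have hpos : (0:ℝ) < mS S := by exact_mod_cast mS_pos (hp S hS)
    have h2 : (t:ℝ) ^ 2 ≤ Real.sqrt (mS S) := by
      apply Real.le_sqrt_of_sq_le
      rw [← pow_mul]; exact_mod_cast hm S hS
    have h3 : ∏ p ∈ S, (65536 / Real.sqrt p ^ 3) = 65536 ^ S.card / Real.sqrt (mS S) ^ 3 := by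
      rw [Finset.prod_div_distrib, Finset.prod_const, Finset.prod_pow]
      congr 2
      rw [mS]; push_cast
      exact (Real.sqrt_prod S fun _ _ => by positivity).symm
    have h4 : (mS S : ℝ) ^ 4 = Real.sqrt (mS S) ^ 5 * Real.sqrt (mS S) ^ 3 := by
      rw [← pow_add]
      calc (mS S : ℝ) ^ 4 = (Real.sqrt (mS S) ^ 2) ^ 4 := by rw [Real.sq_sqrt hpos.le]
        _ = _ := by ring
    have ht' : (0:ℝ) < t := by exact_mod_cast ht
    have h5 : (t:ℝ) ^ 10 ≤ Real.sqrt (mS S) ^ 5 := by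
      calc (t:ℝ) ^ 10 = ((t:ℝ)^2)^5 := by ring
        _ ≤ _ := by gcongr
    have h6 : 0 < Real.sqrt (mS S) := Real.sqrt_pos.2 hpos
    rw [h3, h4, div_mul_div_comm, one_mul]
    gcongr
  refine (Finset.sum_le_sum h1).trans ?_
  rw [← Finset.mul_sum]
  have h2 : ∑ S ∈ 𝓢, ∏ p ∈ S, (65536 / Real.sqrt p ^ 3) ≤ C1 := by
    set P := 𝓢.biUnion id with hP
    calc _ ≤ ∑ S ∈ P.powerset, ∏ p ∈ S, (65536 / Real.sqrt p ^ 3) := by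
          refine Finset.sum_le_sum_of_subset_of_nonneg ?_ ?_
          · intro S hS
            rw [Finset.mem_powerset]
            exact Finset.subset_biUnion_of_mem id hS
          · intro S _ _; exact Finset.prod_nonneg fun _ _ => by positivity
      _ = ∏ p ∈ P, (1 + 65536 / Real.sqrt p ^ 3) := by rw [Finset.prod_one_add]
      _ ≤ ∏ p ∈ P, Real.exp (65536 / Real.sqrt p ^ 3) := by
          refine Finset.prod_le_prod (fun _ _ => by positivity) fun p _ => ?_
          rw [add_comm]; exact Real.add_one_le_exp _
      _ = Real.exp (∑ p ∈ P, 65536 / Real.sqrt p ^ 3) := (Real.exp_sum _ _).symm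
      _ ≤ C1 := by
          apply Real.exp_le_exp.2
          have := sum32 P
          calc _ = 65536 * ∑ p ∈ P, 1 / Real.sqrt p ^ 3 := by
                rw [Finset.mul_sum]; exact Finset.sum_congr rfl fun p _ => by ring
            _ ≤ _ := by gcongr
  calc _ ≤ 1 / (t:ℝ)^10 * C1 := by gcongr
    _ = _ := by ring

section Erg
set_option linter.unusedSectionVars false

variable {X : Type*} [MeasurableSpace X] {μ : Measure X} [IsProbabilityMeasure μ] {T : X → X}

/-- Correlation function. -/
noncomputable def cc (μ : Measure X) (T : X → X) (f : X → ℝ) (z : ℤ) : ℝ :=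
  ∫ x, f (T^[z.toNat] x) * f (T^[(-z).toNat] x) ∂μ

lemma int_bdd {g : X → ℝ} (hg : Measurable g) (c : ℝ) (h : ∀ x, |g x| ≤ c) : Integrable g μ :=
  Integrable.of_bound hg.aestronglyMeasurable c (ae_of_all _ fun x => by simpa using h x)

lemma cc_eq (hT : MeasurePreserving T μ μ) {f : X → ℝ} (hf : Measurable f) (i j : ℕ) :
    ∫ x, f (T^[i] x) * f (T^[j] x) ∂μ = cc μ T f ((i:ℤ) - j) := by
  have hTm := hT.measurable
  have gen : ∀ (g : X → ℝ) (k : ℕ), Measurable g → ∫ x, g (T^[k] x) ∂μ = ∫ x, g x ∂μ := by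
    intro g k hg
    have := (hT.iterate k)
    conv_rhs => rw [← this.map_eq]
    rw [integral_map this.measurable.aemeasurable hg.aestronglyMeasurable]
  unfold cc
  rcases le_total j i with h | h
  · have e1 : ((i:ℤ) - j).toNat = i - j := by omega
    have e2 : (-((i:ℤ) - j)).toNat = 0 := by omega
    rw [e1, e2, ← gen (fun x => f (T^[i-j] x) * f (T^[0] x)) j]
    · simp only [← Function.iterate_add_apply]
      rw [Nat.sub_add_cancel h, zero_add]
    · exact (hf.comp (hTm.iterate _)).mul (hf.comp (hTm.iterate _))
  · have e1 : ((i:ℤ) - j).toNat = 0 := by omega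
    have e2 : (-((i:ℤ) - j)).toNat = j - i := by omega
    rw [e1, e2, ← gen (fun x => f (T^[0] x) * f (T^[j-i] x)) i]
    · simp only [← Function.iterate_add_apply]
      rw [Nat.sub_add_cancel h, zero_add]
    · exact (hf.comp (hTm.iterate _)).mul (hf.comp (hTm.iterate _))

lemma cc_symm (f : X → ℝ) (z : ℤ) : cc μ T f (-z) = cc μ T f z := by
  unfold cc; rw [neg_neg]; simp_rw [mul_comm]

lemma cc_bound (hT : MeasurePreserving T μ μ) {A : Set X} (hA : MeasurableSet A) (z : ℤ) :
    |cc μ T (A.indicator 1) z| ≤ μ.real A := by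
  have hf : Measurable (A.indicator (1 : X → ℝ)) := measurable_one.indicator hA
  have hTm := hT.measurable
  have h01 : ∀ x, 0 ≤ A.indicator (1 : X → ℝ) x ∧ A.indicator (1 : X → ℝ) x ≤ 1 := by
    intro x; by_cases h : x ∈ A <;> simp [h]
  rw [cc, abs_of_nonneg (integral_nonneg fun x => mul_nonneg (h01 _).1 (h01 _).1)]
  have h1 : ∫ x, A.indicator (1 : X → ℝ) (T^[z.toNat] x) ∂μ = μ.real A := by
    have := hT.iterate z.toNat
    rw [← integral_indicator_one hA]
    conv_rhs => rw [← this.map_eq]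
    rw [integral_map this.measurable.aemeasurable hf.aestronglyMeasurable]
  rw [← h1]
  refine integral_mono (int_bdd ?_ 1 ?_) (int_bdd ?_ 1 ?_) ?_
  · exact (hf.comp (hTm.iterate _)).mul (hf.comp (hTm.iterate _))
  · intro x; rw [abs_mul, abs_of_nonneg (h01 _).1, abs_of_nonneg (h01 _).1]
    exact mul_le_one₀ (h01 _).2 (h01 _).1 (h01 _).2
  · exact (hf.comp (hTm.iterate _))
  · intro x; rw [abs_of_nonneg (h01 _).1]; exact (h01 _).2
  · intro x; exact mul_le_of_le_one_right (h01 _).1 (h01 _).2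

/-- Integral of a product of two finite combinations of iterates. -/
lemma int_comb (hT : MeasurePreserving T μ μ) {f : X → ℝ} (hf : Measurable f) (hb : ∀ x, |f x| ≤ 1)
    {ι κ : Type*} (s : Finset ι) (r : Finset κ) (a : ι → ℝ) (b : κ → ℝ) (i : ι → ℕ) (j : κ → ℕ) :
    ∫ x, (∑ k ∈ s, a k * f (T^[i k] x)) * (∑ l ∈ r, b l * f (T^[j l] x)) ∂μ
      = ∑ k ∈ s, ∑ l ∈ r, a k * b l * cc μ T f ((i k : ℤ) - j l) := by
  have hTm := hT.measurable
  have hI : ∀ k l, Integrable (fun x => (a k * b l) * (f (T^[i k] x) * f (T^[j l] x))) μ := by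
    intro k l
    apply Integrable.const_mul
    refine int_bdd ((hf.comp (hTm.iterate _)).mul (hf.comp (hTm.iterate _))) 1 fun x => ?_
    rw [abs_mul]
    exact mul_le_one₀ (hb _) (abs_nonneg _) (hb _)
  have : ∀ x, (∑ k ∈ s, a k * f (T^[i k] x)) * (∑ l ∈ r, b l * f (T^[j l] x)) =
      ∑ k ∈ s, ∑ l ∈ r, (a k * b l) * (f (T^[i k] x) * f (T^[j l] x)) := by
    intro x
    rw [Finset.sum_mul_sum]
    exact Finset.sum_congr rfl fun _ _ => Finset.sum_congr rfl fun _ _ => by ring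
  simp_rw [this]
  rw [integral_finsetSum _ fun k _ => integrable_finsetSum _ fun l _ => hI k l]
  refine Finset.sum_congr rfl fun k _ => ?_
  rw [integral_finsetSum _ fun l _ => hI k l]
  refine Finset.sum_congr rfl fun l _ => ?_
  rw [integral_const_mul, cc_eq hT hf]

/-- Cauchy–Schwarz / van der Corput step -/
lemma vdc (hT : MeasurePreserving T μ μ) {A : Set X} (hA : MeasurableSet A) (hApos : 0 < μ.real A)
    (a : ℤ → ℝ) (N : ℕ) :
    (∫ x, (∑ n ∈ Finset.range N, a n * A.indicator (1 : X → ℝ) (T^[n] x)) ^ 2 ∂μ) ^ 2 ≤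
      μ.real A * WW N (cc μ T (A.indicator 1)) a a a a := by
  set f : X → ℝ := A.indicator 1 with hfdef
  have hf : Measurable f := measurable_one.indicator hA
  have hb : ∀ x, |f x| ≤ 1 := by
    intro x; by_cases h : x ∈ A <;> simp [hfdef, h]
  have hTm := hT.measurable
  set P := Finset.range N ×ˢ Finset.range N with hPdef
  set Z : X → ℝ := fun x => ∑ q ∈ P, (a q.1 * a q.2) * f (T^[N + q.2 - q.1] x) with hZ
  set I := ∫ x, (∑ n ∈ Finset.range N, a n * f (T^[n] x)) ^ 2 ∂μ with hI
  have hI2 : I = ∑ q ∈ P, (a q.1 * a q.2) * cc μ T f ((q.2:ℤ) - q.1) := by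
    rw [hI]; simp_rw [pow_two]
    rw [int_comb hT hf hb, hPdef, Finset.sum_product]
    refine Finset.sum_congr rfl fun n _ => Finset.sum_congr rfl fun m _ => ?_
    rw [← cc_symm, neg_sub]
  have hq : ∀ q ∈ P, ((N + q.2 - q.1 : ℕ) : ℤ) = N + q.2 - q.1 := by
    intro q hq
    rw [hPdef, Finset.mem_product, Finset.mem_range, Finset.mem_range] at hq
    omega
  have hfZ : ∫ x, f (T^[N] x) * Z x ∂μ = I := by
    have := int_comb hT hf hb {()} P (fun _ => 1) (fun q => a q.1 * a q.2) (fun _ => N) (fun q => N + q.2 - q.1)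
    simp only [Finset.sum_singleton, one_mul] at this
    rw [hZ, this, hI2]
    refine Finset.sum_congr rfl fun q hqm => ?_
    rw [hq q hqm, ← cc_symm]
    congr 2; ring
  have hZZ : ∫ x, Z x * Z x ∂μ = WW N (cc μ T f) a a a a := by
    rw [hZ, int_comb hT hf hb]
    rw [WW_eq, hPdef, Finset.sum_product]
    refine Finset.sum_congr rfl fun n hn => Finset.sum_congr rfl fun m hm => ?_
    rw [Finset.sum_product]
    refine Finset.sum_congr rfl fun k hk => Finset.sum_congr rfl fun l hl => ?_
    rw [hq (n, m) (by rw [hPdef, Finset.mem_product]; exact ⟨hn, hm⟩),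
      hq (k, l) (by rw [hPdef, Finset.mem_product]; exact ⟨hk, hl⟩)]
    simp only
    rw [show (N:ℤ) + m - n - (N + l - k) = m - n - l + k by ring]; ring
  have hff : ∫ x, f (T^[N] x) * f (T^[N] x) ∂μ = μ.real A := by
    rw [cc_eq hT hf, sub_self]
    unfold cc
    simp only [Int.toNat_zero, neg_zero, Function.iterate_zero, id_eq]
    rw [← integral_indicator_one hA]
    refine integral_congr_ae (ae_of_all _ fun x => ?_)
    by_cases h : x ∈ A <;> simp [hfdef, h]
  have hZm : Measurable Z := by
    rw [hZ]
    exact Finset.measurable_fun_sum _ fun q _ => (hf.comp (hTm.iterate _)).const_mul _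
  have hZb : ∃ c, ∀ x, |Z x| ≤ c := by
    refine ⟨∑ q ∈ P, |a q.1 * a q.2|, fun x => ?_⟩
    refine (Finset.abs_sum_le_sum_abs _ _).trans (Finset.sum_le_sum fun q _ => ?_)
    rw [abs_mul]
    exact mul_le_of_le_one_right (abs_nonneg _) (hb _)
  obtain ⟨c, hZc⟩ := hZb
  have hc : 0 ≤ c := by
    obtain ⟨x⟩ : Nonempty X := nonempty_of_isProbabilityMeasure μ
    exact (abs_nonneg _).trans (hZc x)
  have hfm : Measurable fun x => f (T^[N] x) := hf.comp (hTm.iterate _)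
  set α := μ.real A
  set s := I / α with hs
  have h0 : 0 ≤ ∫ x, (Z x - s * f (T^[N] x)) ^ 2 ∂μ := integral_nonneg fun x => sq_nonneg _
  have h1 : ∫ x, (Z x - s * f (T^[N] x)) ^ 2 ∂μ = WW N (cc μ T f) a a a a - 2 * s * I + s ^ 2 * α := by
    have e : ∀ x, (Z x - s * f (T^[N] x)) ^ 2 = Z x * Z x - (2 * s) * (f (T^[N] x) * Z x)
        + s ^ 2 * (f (T^[N] x) * f (T^[N] x)) := fun x => by ring
    simp_rw [e]
    have i1 : Integrable (fun x => Z x * Z x) μ := int_bdd (hZm.mul hZm) (c * c) fun x => by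
      rw [abs_mul]; exact mul_le_mul (hZc x) (hZc x) (abs_nonneg _) hc
    have i2 : Integrable (fun x => (2 * s) * (f (T^[N] x) * Z x)) μ := 
      (int_bdd (g := fun x => f (T^[N] x) * Z x) (hfm.mul hZm) (1 * c) fun x => by
      rw [abs_mul]; exact mul_le_mul (hb _) (hZc x) (abs_nonneg _) zero_le_one).const_mul _
    have i3 : Integrable (fun x => s ^ 2 * (f (T^[N] x) * f (T^[N] x))) μ := 
      (int_bdd (g := fun x => f (T^[N] x) * f (T^[N] x)) (hfm.mul hfm) (1 * 1) fun x => by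
      rw [abs_mul]; exact mul_le_mul (hb _) (hb _) (abs_nonneg _) zero_le_one).const_mul _
    have i12 : Integrable (fun x => Z x * Z x - (2 * s) * (f (T^[N] x) * Z x)) μ := i1.sub i2
    rw [integral_add i12 i3, integral_sub i1 i2, integral_const_mul, integral_const_mul,
      hfZ, hZZ, hff]
  rw [h1, hs] at h0
  have h2 : WW N (cc μ T f) a a a a - 2 * (I / α) * I + (I / α) ^ 2 * α = 
      WW N (cc μ T f) a a a a - I ^ 2 / α := by field_simp; ring
  rw [h2] at h0
  have h3 : I ^ 2 / α ≤ WW N (cc μ T f) a a a a := by linarith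
  rw [div_le_iff₀ hApos] at h3
  linarith

/-- weighted average -/
noncomputable def MM (T : X → X) (f : X → ℝ) (g : ℤ → ℝ) (N : ℕ) (x : X) : ℝ :=
  (1 / (N:ℝ)) * ∑ n ∈ Finset.range N, g n * f (T^[n] x)

noncomputable def C0 : ℝ := 16 * C1 + 4 + 1

lemma C0_pos : 1 ≤ C0 := by have := C1_pos; unfold C0; linarith

theorem L2_main (hT : MeasurePreserving T μ μ) {A : Set X} (hA : MeasurableSet A) (hApos : 0 < μ.real A)
    (𝓢 : Finset (Finset ℕ)) (D N t : ℕ) (B : Finset ℕ → ℝ) (ht : 1 ≤ t) 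
    (hp : ∀ S ∈ 𝓢, ∀ p ∈ S, p.Prime) (hm : ∀ S ∈ 𝓢, t ^ 4 ≤ mS S)
    (hD : ∀ S ∈ 𝓢, mS S ≤ D) (hDN : D ^ 17 ≤ N)
    (hB : ∀ S ∈ 𝓢, |B S| ≤ 4 ^ S.card) :
    ∫ x, (MM T (A.indicator 1) (fun n => ∑ S ∈ 𝓢, B S * chiS S n) N x) ^ 2 ∂μ ≤
      C0 * μ.real A / (t:ℝ) ^ 5 := by
  have hC0 := C0_pos
  have hC1 := C1_pos
  have ht0 : (1:ℝ) ≤ t := by exact_mod_cast ht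
  rcases 𝓢.eq_empty_or_nonempty with rfl | ⟨S0, hS0⟩
  · simp only [MM, Finset.sum_empty, zero_mul, Finset.sum_const_zero, mul_zero, ne_eq, OfNat.ofNat_ne_zero,
      not_false_eq_true, zero_pow, integral_zero]
    positivity
  have hD1 : 1 ≤ D := (mS_pos (hp S0 hS0)).trans_le (hD S0 hS0)
  have htD : t ^ 4 ≤ D := (hm S0 hS0).trans (hD S0 hS0)
  have hDN' : D ≤ N := (Nat.le_self_pow (by norm_num) D).trans hDN
  have hN : 1 ≤ N := hD1.trans hDN'
  have hN0 : (0:ℝ) < N := by exact_mod_cast hN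
  have hD0 : (0:ℝ) < D := by exact_mod_cast hD1
  set α := μ.real A with hα
  set a : ℤ → ℝ := fun n => ∑ S ∈ 𝓢, B S * chiS S n with ha
  set I := ∫ x, (∑ n ∈ Finset.range N, a n * A.indicator (1 : X → ℝ) (T^[n] x)) ^ 2 ∂μ with hI
  have h1 := vdc hT hA hApos a N
  have h2 := WW_bound 𝓢 D N B hp hD hDN' hB (cc μ T (A.indicator 1)) α (cc_bound hT hA)
  have h3 := rankin 𝓢 t ht hp hm
  have h4 : (4:ℝ) * D ^ 14 * N ^ 3 ≤ 4 * N ^ 4 / t ^ 10 := by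
    rw [le_div_iff₀ (by positivity)]
    have e1 : (t:ℝ) ^ 10 ≤ D ^ 3 := by
      calc (t:ℝ)^10 ≤ t ^ 12 := pow_le_pow_right₀ ht0 (by norm_num)
        _ = ((t ^ 4 : ℕ) : ℝ) ^ 3 := by push_cast; ring
        _ ≤ _ := by gcongr
    have e2 : (D:ℝ) ^ 17 ≤ N := by exact_mod_cast hDN
    calc (4:ℝ) * D ^ 14 * N ^ 3 * (t:ℝ) ^ 10 ≤ 4 * (D:ℝ) ^ 14 * (N:ℝ) ^ 3 * (D:ℝ) ^ 3 := by gcongr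
      _ = 4 * (D:ℝ) ^ 17 * (N:ℝ) ^ 3 := by ring
      _ ≤ 4 * (N:ℝ) * (N:ℝ) ^ 3 := by gcongr
      _ = _ := by ring
  have h5 : I ^ 2 ≤ (C0 * α * N ^ 2 / t ^ 5) ^ 2 := by
    calc I ^ 2 ≤ α * WW N (cc μ T (A.indicator 1)) a a a a := h1
      _ ≤ α * (α * (4 * D ^ 14 * N ^ 3 + 16 * N ^ 4 * ∑ S ∈ 𝓢, 65536 ^ S.card / (mS S : ℝ) ^ 4)) := by
          gcongr; exact (le_abs_self _).trans h2
      _ ≤ α * (α * (4 * N ^ 4 / t ^ 10 + 16 * N ^ 4 * (C1 / (t:ℝ) ^ 10))) := by gcongr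
      _ = (16 * C1 + 4) * (α ^ 2 * N ^ 4 / t ^ 10) := by ring
      _ ≤ C0 ^ 2 * (α ^ 2 * N ^ 4 / t ^ 10) := by
          gcongr
          unfold C0; nlinarith
      _ = _ := by ring
  have h6 : I ≤ C0 * α * N ^ 2 / t ^ 5 := by
    refine le_of_sq_le_sq h5 ?_
    positivity
  have h7 : ∫ x, (MM T (A.indicator 1) a N x) ^ 2 ∂μ = (1 / (N:ℝ)) ^ 2 * I := by
    rw [hI, ← integral_const_mul]
    refine integral_congr_ae (ae_of_all _ fun x => ?_)
    simp only [MM]; ring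
  rw [h7]
  calc (1 / (N:ℝ)) ^ 2 * I ≤ (1 / (N:ℝ)) ^ 2 * (C0 * α * N ^ 2 / t ^ 5) := by gcongr
    _ = _ := by field_simp

end Erg

end PrimeMax

namespace PrimeMax
open Finset

section Erg2
set_option linter.unusedSectionVars false
variable {X : Type*} [MeasurableSpace X] {μ : Measure X} [IsProbabilityMeasure μ] {T : X → X}

noncomputable def gmax (T : X → X) (g : X → ℝ) : ℕ → X → ℝ
  | 0, _ => 0
  | (n+1), x => max 0 (g x + gmax T g n (T x))

lemma gmax_nonneg (g : X → ℝ) (n : ℕ) (x : X) : 0 ≤ gmax T g n x := by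
  cases n with
  | zero => exact le_refl _
  | succ n => exact le_max_left _ _

lemma gmax_succ_le (g : X → ℝ) (n : ℕ) : ∀ x : X, gmax T g n x ≤ gmax T g (n+1) x := by
  induction n with
  | zero => intro x; exact le_max_left _ _
  | succ n ih => 
    intro x
    have := ih (T x)
    simp only [gmax] at this ⊢
    exact max_le_max le_rfl (by linarith)

lemma gmax_mono (g : X → ℝ) (x : X) : Monotone fun n => gmax T g n x :=
  monotone_nat_of_le_succ fun n => gmax_succ_le g n x

lemma sum_le_gmax (g : X → ℝ) (k : ℕ) : ∀ x : X, ∑ q ∈ Finset.range k, g (T^[q] x) ≤ gmax T g k x := by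
  induction k with
  | zero => intro x; simp [gmax]
  | succ k ih =>
    intro x
    rw [Finset.sum_range_succ']
    simp only [Function.iterate_succ_apply, Function.iterate_zero, id_eq]
    have := ih (T x)
    rw [gmax]
    refine le_trans ?_ (le_max_right _ _)
    linarith

lemma gmax_meas (hT : Measurable T) {g : X → ℝ} (hg : Measurable g) (n : ℕ) : Measurable (gmax T g n) := by
  induction n with
  | zero => exact measurable_const
  | succ n ih => exact measurable_const.max (hg.add (ih.comp hT))

lemma gmax_bdd {g : X → ℝ} {c : ℝ} (hg : ∀ x, |g x| ≤ c) (n : ℕ) : ∀ x, |gmax T g n x| ≤ n * c := by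
  induction n with
  | zero => intro x; simp [gmax]
  | succ n ih =>
    intro x
    have hc : 0 ≤ c := (abs_nonneg _).trans (hg x)
    rw [abs_of_nonneg (gmax_nonneg _ _ _), gmax]
    push_cast
    have h1 := le_of_abs_le (ih (T x))
    have h2 := le_of_abs_le (hg x)
    apply max_le
    · positivity
    · linarith

theorem maximal_ergodic (hT : MeasurePreserving T μ μ) {F : X → ℝ} (hF : Measurable F) (h0 : ∀ x, 0 ≤ F x)
    {c : ℝ} (hc : ∀ x, |F x| ≤ c) {s : ℝ} (hs : 0 < s) :
    μ {x | ∃ b : ℕ, s * b < ∑ q ∈ Finset.range b, F (T^[q] x)} ≤ ENNReal.ofReal ((∫ x, F x ∂μ) / s) := by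
  have hTm := hT.measurable
  set g : X → ℝ := fun x => F x - s with hg
  have hgm : Measurable g := hF.sub_const s
  have hgb : ∀ x, |g x| ≤ c + s := by
    intro x
    have := abs_le.1 (hc x)
    rw [abs_le, hg]; constructor <;> simp only <;> linarith
  have hE : ∀ n, MeasurableSet {x | 0 < gmax T g (n+1) x} := fun n =>
    measurableSet_lt measurable_const (gmax_meas hTm hgm _)
  have key : ∀ n, μ {x | 0 < gmax T g (n+1) x} ≤ ENNReal.ofReal ((∫ x, F x ∂μ) / s) := by
    intro n
    set E := {x | 0 < gmax T g (n+1) x} with hEdef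
    have hMi : Integrable (gmax T g (n+1)) μ := int_bdd (gmax_meas hTm hgm _) _ (gmax_bdd hgb _)
    have hMi2 : Integrable (fun x => gmax T g (n+1) (T x)) μ := 
      int_bdd ((gmax_meas hTm hgm _).comp hTm) _ (fun x => gmax_bdd hgb (n+1) (T x))
    have hFi : Integrable F μ := int_bdd hF c hc
    have hgE : Integrable (E.indicator g) μ := (int_bdd hgm _ hgb).indicator (hE n)
    have h1 : ∀ x, gmax T g (n+1) x - gmax T g (n+1) (T x) ≤ E.indicator g x := by
      intro x
      by_cases hx : x ∈ E
      · rw [Set.indicator_of_mem hx]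
        have hx' : 0 < gmax T g (n+1) x := hx
        have h2 : gmax T g (n+1) x = g x + gmax T g n (T x) := by
          rw [gmax] at hx' ⊢
          rcases lt_max_iff.1 hx' with h | h
          · exact absurd h (lt_irrefl _)
          · exact max_eq_right h.le
        have := gmax_succ_le (T := T) g n (T x)
        linarith
      · rw [Set.indicator_of_notMem hx]
        have hx' : gmax T g (n+1) x ≤ 0 := not_lt.1 hx
        have := gmax_nonneg (T := T) g (n+1) (T x)
        linarith
    have h2 : 0 ≤ ∫ x, E.indicator g x ∂μ := by
      have := integral_mono (hMi.sub hMi2) hgE h1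
      simp only [Pi.sub_apply] at this
      rw [integral_sub hMi hMi2] at this
      have e : ∫ x, gmax T g (n+1) (T x) ∂μ = ∫ x, gmax T g (n+1) x ∂μ := by
        conv_rhs => rw [← hT.map_eq]
        rw [integral_map hTm.aemeasurable (gmax_meas hTm hgm _).aestronglyMeasurable]
      rw [e, sub_self] at this
      exact this
    have h3 : ∫ x, E.indicator g x ∂μ ≤ ∫ x, F x ∂μ - s * μ.real E := by
      have i1 : Integrable (E.indicator (fun _ => s)) μ := (integrable_const s).indicator (hE n)
      have e : ∫ x, E.indicator (fun _ => s) x ∂μ = s * μ.real E := by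
        rw [integral_indicator_const _ (hE n), smul_eq_mul, mul_comm]
      rw [← e, ← integral_sub hFi i1]
      refine integral_mono hgE (hFi.sub i1) fun x => ?_
      by_cases hx : x ∈ E
      · simp [hx, hg]
      · simp [hx, h0 x]
    have h4 : μ.real E ≤ (∫ x, F x ∂μ) / s := by
      rw [le_div_iff₀ hs]; linarith
    rw [← ENNReal.ofReal_toReal (measure_ne_top μ E)]
    exact ENNReal.ofReal_le_ofReal h4
  have hsub : {x | ∃ b : ℕ, s * b < ∑ q ∈ Finset.range b, F (T^[q] x)} ⊆ ⋃ n, {x | 0 < gmax T g (n+1) x} := by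
    rintro x ⟨b, hb⟩
    rw [Set.mem_iUnion]
    refine ⟨b, ?_⟩
    have h1 := sum_le_gmax (T := T) g b x
    have h2 := gmax_succ_le (T := T) g b x
    have h3 : ∑ q ∈ Finset.range b, g (T^[q] x) = ∑ q ∈ Finset.range b, F (T^[q] x) - s * b := by
      rw [hg]; simp only [Finset.sum_sub_distrib]; simp; ring
    show 0 < gmax T g (b+1) x
    linarith
  refine (measure_mono hsub).trans ?_
  rw [Monotone.measure_iUnion]
  · exact iSup_le key
  · intro n m hnm x hx
    have hx' : 0 < gmax T g (n+1) x := hx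
    exact hx'.trans_le (gmax_mono g x (Nat.succ_le_succ hnm))

/-- Chebyshev in `L²`. -/
lemma cheb {F : X → ℝ} (hF : Measurable F) {c : ℝ} (hc : ∀ x, |F x| ≤ c) {s : ℝ} (hs : 0 < s) {v : ℝ}
    (hv : ∫ x, F x ^ 2 ∂μ ≤ v) :
    μ {x | s < F x} ≤ ENNReal.ofReal (v / s ^ 2) := by
  have hi : Integrable (fun x => F x ^ 2) μ := int_bdd (hF.pow_const 2) (c ^ 2) fun x => by
    rw [abs_pow]; exact pow_le_pow_left₀ (abs_nonneg _) (hc x) 2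
  have h1 := mul_meas_ge_le_integral_of_nonneg (μ := μ) (f := fun x => F x ^ 2)
    (ae_of_all _ fun x => sq_nonneg _) hi (s ^ 2)
  have h2 : μ.real {x | s ^ 2 ≤ F x ^ 2} ≤ v / s ^ 2 := by
    rw [le_div_iff₀ (by positivity)]; linarith
  refine le_trans (measure_mono (t := {x | s ^ 2 ≤ F x ^ 2}) ?_) ?_
  · intro x hx
    have : s < F x := hx
    show s ^ 2 ≤ F x ^ 2
    gcongr
  · rw [← ENNReal.ofReal_toReal (measure_ne_top μ _)]
    exact ENNReal.ofReal_le_ofReal h2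

/-- `L¹ ≤ L²`. -/
lemma l1_le {F : X → ℝ} (hF : Measurable F) {c : ℝ} (hc : ∀ x, |F x| ≤ c) {v : ℝ} (hv0 : 0 < v)
    (hv : ∫ x, F x ^ 2 ∂μ ≤ v ^ 2) : ∫ x, |F x| ∂μ ≤ v := by
  have hi : Integrable (fun x => F x ^ 2) μ := int_bdd (hF.pow_const 2) (c ^ 2) fun x => by
    rw [abs_pow]; exact pow_le_pow_left₀ (abs_nonneg _) (hc x) 2
  have h1 : ∀ x, |F x| ≤ F x ^ 2 / (2 * v) + v / 2 := by
    intro x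
    rw [← sq_abs, div_add_div _ _ (by positivity) (by norm_num), le_div_iff₀ (by positivity)]
    nlinarith [sq_nonneg (|F x| - v)]
  have h2 := integral_mono (μ := μ) (int_bdd (μ := μ) hF.abs c (fun x => by rw [abs_abs]; exact hc x))
    ((hi.div_const (2 * v)).add (integrable_const (v/2))) h1
  simp only [Pi.add_apply] at h2
  rw [integral_add (hi.div_const _) (integrable_const _), integral_div] at h2
  simp at h2
  refine h2.trans ?_
  calc _ ≤ v ^ 2 / (2 * v) + v / 2 := by gcongr
    _ = v := by field_simp; ring

end Erg2
end PrimeMax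

namespace PrimeMax
open Finset

noncomputable def alp (p : ℕ) : ℝ := -((p:ℝ) - 2) / ((p:ℝ) - 1)

lemma abs_alp {p : ℕ} (hp : p.Prime) : |alp p| ≤ 1 := by
  have : (2:ℝ) ≤ p := by exact_mod_cast hp.two_le
  rw [alp, abs_div, abs_neg, abs_of_nonneg (by linarith), abs_of_nonneg (by linarith), div_le_one (by linarith)]
  linarith

lemma chi_sq {p : ℕ} (hp : p.Prime) (n : ℤ) : chi p n * chi p n = alp p * chi p n + 1 / ((p:ℝ) - 1) := by
  have : (2:ℝ) ≤ p := by exact_mod_cast hp.two_le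
  have h : (p:ℝ) - 1 ≠ 0 := by linarith
  unfold chi alp
  split_ifs <;> field_simp <;> ring

lemma chiS_union {S R : Finset ℕ} (h : Disjoint S R) (n : ℤ) : chiS (S ∪ R) n = chiS S n * chiS R n :=
  Finset.prod_union h

/-- the set attached to a triple -/
def eT (τ : Finset ℕ × Finset ℕ × Finset ℕ) : Finset ℕ := ((τ.1 \ τ.2.1) ∪ (τ.2.1 \ τ.1)) ∪ τ.2.2

noncomputable def wT (τ : Finset ℕ × Finset ℕ × Finset ℕ) : ℝ :=
  (∏ p ∈ τ.2.2, alp p) * iphi ((τ.1 ∩ τ.2.1) \ τ.2.2)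

lemma chiS_mul {S1 S2 : Finset ℕ} (h1 : ∀ p ∈ S1, p.Prime) (n : ℤ) :
    chiS S1 n * chiS S2 n = ∑ J ∈ (S1 ∩ S2).powerset, wT (S1, S2, J) * chiS (eT (S1, S2, J)) n := by
  have e1 : chiS S1 n = chiS (S1 ∩ S2) n * chiS (S1 \ S2) n := (Finset.prod_inter_mul_prod_sdiff S1 S2 _).symm
  have e2 : chiS S2 n = chiS (S1 ∩ S2) n * chiS (S2 \ S1) n := by
    rw [Finset.inter_comm]; exact (Finset.prod_inter_mul_prod_sdiff S2 S1 _).symm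
  have e3 : chiS (S1 ∩ S2) n * chiS (S1 ∩ S2) n = 
      ∑ J ∈ (S1 ∩ S2).powerset, (∏ p ∈ J, alp p * chi p n) * iphi ((S1 ∩ S2) \ J) := by
    rw [chiS, ← Finset.prod_mul_distrib]
    rw [Finset.prod_congr rfl fun p hp => chi_sq (h1 p (Finset.mem_inter.1 hp).1) n, Finset.prod_add]
    rfl
  rw [e1, e2, show chiS (S1 ∩ S2) n * chiS (S1 \ S2) n * (chiS (S1 ∩ S2) n * chiS (S2 \ S1) n) =
    chiS (S1 ∩ S2) n * chiS (S1 ∩ S2) n * (chiS (S1 \ S2) n * chiS (S2 \ S1) n) by ring, e3, Finset.sum_mul]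
  refine Finset.sum_congr rfl fun J hJ => ?_
  rw [Finset.mem_powerset] at hJ
  have d1 : Disjoint (S1 \ S2) (S2 \ S1) := by
    rw [Finset.disjoint_left]; intro p; simp; tauto
  have d2 : Disjoint ((S1 \ S2) ∪ (S2 \ S1)) J := by
    rw [Finset.disjoint_left]; intro p hp hpJ
    have := hJ hpJ
    simp at hp this; tauto
  simp only [eT, wT]
  rw [chiS_union d2, chiS_union d1, Finset.prod_mul_distrib]
  simp only [chiS]
  ring

/-- Selberg weight -/
noncomputable def kap (u Q : ℕ) (n : ℤ) : ℝ := (∑ S ∈ SF u Q, chiS S n) ^ 2 / GG u Q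

def EE (u Q : ℕ) : Finset (Finset ℕ) := (Pr u Q).powerset.filter (fun S => mS S ≤ Q ^ 2)

lemma mem_EE {u Q : ℕ} {S : Finset ℕ} : S ∈ EE u Q ↔ S ⊆ Pr u Q ∧ mS S ≤ Q ^ 2 := by
  simp [EE]

def Tri (u Q : ℕ) : Finset (Finset ℕ × Finset ℕ × Finset ℕ) :=
  (SF u Q ×ˢ SF u Q ×ˢ (Pr u Q).powerset).filter (fun τ => τ.2.2 ⊆ τ.1 ∩ τ.2.1)

lemma mem_Tri {u Q : ℕ} {τ : Finset ℕ × Finset ℕ × Finset ℕ} : τ ∈ Tri u Q ↔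
    τ.1 ∈ SF u Q ∧ τ.2.1 ∈ SF u Q ∧ τ.2.2 ⊆ τ.1 ∩ τ.2.1 := by
  simp only [Tri, Finset.mem_filter, Finset.mem_product, Finset.mem_powerset]
  constructor
  · rintro ⟨⟨h1, h2, _⟩, h4⟩; exact ⟨h1, h2, h4⟩
  · rintro ⟨h1, h2, h4⟩
    exact ⟨⟨h1, h2, h4.trans (Finset.inter_subset_left.trans (mem_SF.1 h1).1)⟩, h4⟩

lemma mS_mono {S R : Finset ℕ} (hR : ∀ p ∈ R, p.Prime) (h : S ⊆ R) : mS S ≤ mS R := by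
  refine Nat.le_of_dvd (mS_pos hR) ?_
  exact Finset.prod_dvd_prod_of_subset _ _ _ h

lemma mS_union_le {S R : Finset ℕ} (hS : ∀ p ∈ S, p.Prime) : mS (S ∪ R) ≤ mS S * mS R := by
  have h : mS (S ∪ R) * mS (S ∩ R) = mS S * mS R := Finset.prod_union_inter
  rw [← h]
  exact Nat.le_mul_of_pos_right _ (mS_pos fun p hp => hS p (Finset.mem_inter.1 hp).1)

lemma eT_mem {u Q : ℕ} {τ} (h : τ ∈ Tri u Q) : eT τ ∈ EE u Q := by
  obtain ⟨h1, h2, h3⟩ := mem_Tri.1 h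
  have h1' := mem_SF.1 h1
  have h2' := mem_SF.1 h2
  have hsub : eT τ ⊆ τ.1 ∪ τ.2.1 := by
    intro p hp
    simp only [eT, Finset.mem_union, Finset.mem_sdiff] at hp ⊢
    rcases hp with (hp | hp) | hp
    · exact Or.inl hp.1
    · exact Or.inr hp.1
    · exact Or.inl (Finset.mem_inter.1 (h3 hp)).1
  have hU : τ.1 ∪ τ.2.1 ⊆ Pr u Q := Finset.union_subset h1'.1 h2'.1
  rw [mem_EE]
  refine ⟨hsub.trans hU, (mS_mono (prime_of_sub_Pr hU) hsub).trans ((mS_union_le (prime_of_sub_Pr h1'.1)).trans ?_)⟩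
  rw [sq]
  exact Nat.mul_le_mul h1'.2 h2'.2

noncomputable def AE (u Q : ℕ) (E : Finset ℕ) : ℝ :=
  (∑ τ ∈ (Tri u Q).filter (fun τ => eT τ = E), wT τ) / GG u Q

lemma kap_expand (u Q : ℕ) (n : ℤ) : kap u Q n = ∑ E ∈ EE u Q, AE u Q E * chiS E n := by
  have h1 : (∑ S ∈ SF u Q, chiS S n) ^ 2 = ∑ τ ∈ Tri u Q, wT τ * chiS (eT τ) n := by
    rw [sq, Finset.sum_mul_sum]
    have : ∀ S1 ∈ SF u Q, ∀ S2 ∈ SF u Q, chiS S1 n * chiS S2 n = 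
        ∑ J ∈ (Pr u Q).powerset, if J ⊆ S1 ∩ S2 then wT (S1, S2, J) * chiS (eT (S1, S2, J)) n else 0 := by
      intro S1 m1 S2 m2
      rw [chiS_mul (prime_of_sub_Pr (mem_SF.1 m1).1), ← Finset.sum_filter]
      refine Finset.sum_congr ?_ fun _ _ => rfl
      ext J
      simp only [Finset.mem_powerset, Finset.mem_filter]
      exact ⟨fun h => ⟨h.trans (Finset.inter_subset_left.trans (mem_SF.1 m1).1), h⟩, fun h => h.2⟩
    rw [Finset.sum_congr rfl fun S1 m1 => Finset.sum_congr rfl fun S2 m2 => this S1 m1 S2 m2]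
    rw [Tri, Finset.sum_filter, Finset.sum_product]
    refine Finset.sum_congr rfl fun S1 m1 => ?_
    rw [Finset.sum_product]
  rw [kap, h1, ← Finset.sum_fiberwise_of_maps_to (fun τ hτ => eT_mem hτ), Finset.sum_div]
  refine Finset.sum_congr rfl fun E _ => ?_
  rw [AE, div_mul_eq_mul_div, Finset.sum_mul]
  congr 1
  refine Finset.sum_congr rfl fun τ hτ => ?_
  rw [(Finset.mem_filter.1 hτ).2]

lemma prop6 {a b c a' b' c' : Prop} (b1 : (a ∧ ¬ b) ↔ (a' ∧ ¬ b')) (b2 : (b ∧ ¬ a) ↔ (b' ∧ ¬ a'))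
    (b3 : ((a ∧ b) ∧ ¬ c) ↔ ((a' ∧ b') ∧ ¬ c'))
    (b4 : ((a ∧ ¬ b ∨ b ∧ ¬ a) ∨ c) ↔ ((a' ∧ ¬ b' ∨ b' ∧ ¬ a') ∨ c'))
    (b5 : c → a ∧ b) (b6 : c' → a' ∧ b') : (a ↔ a') ∧ (b ↔ b') ∧ (c ↔ c') := by
  by_cases ha : a <;> by_cases hb : b <;> by_cases hc : c <;> by_cases ha' : a' <;>
    by_cases hb' : b' <;> by_cases hc' : c' <;> simp [ha, hb, hc, ha', hb', hc'] at *

lemma AE_bound {u Q : ℕ} (hQ : 1 ≤ Q) (E : Finset ℕ) : |AE u Q E| ≤ 4 ^ E.card := by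
  have hG := GG_pos u Q hQ
  rw [AE, abs_div, abs_of_pos (by linarith : 0 < GG u Q), div_le_iff₀ (by linarith)]
  have h1 : ∀ τ ∈ (Tri u Q).filter (fun τ => eT τ = E), |wT τ| ≤ iphi ((τ.1 ∩ τ.2.1) \ τ.2.2) := by
    intro τ hτ
    obtain ⟨m1, m2, m3⟩ := mem_Tri.1 (Finset.mem_filter.1 hτ).1
    have hp := prime_of_sub_Pr (mem_SF.1 m1).1
    have hnn : 0 ≤ iphi ((τ.1 ∩ τ.2.1) \ τ.2.2) := iphi_nonneg fun p hpm => 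
      hp p (Finset.mem_inter.1 (Finset.mem_sdiff.1 hpm).1).1
    rw [wT, abs_mul, abs_of_nonneg hnn]
    refine mul_le_of_le_one_left hnn ?_
    rw [Finset.abs_prod]
    exact Finset.prod_le_one (fun _ _ => abs_nonneg _) fun p hpm => abs_alp (hp p (Finset.mem_inter.1 (m3 hpm)).1)
  refine (Finset.abs_sum_le_sum_abs _ _).trans ((Finset.sum_le_sum h1).trans ?_)
  have e : (4:ℝ) ^ E.card * GG u Q = ∑ y ∈ E.powerset ×ˢ E.powerset ×ˢ SF u Q, iphi y.2.2 := by
    rw [Finset.sum_product]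
    simp only [Finset.sum_product, Finset.sum_const, nsmul_eq_mul, Finset.card_powerset]
    rw [GG, ← mul_assoc]
    congr 1
    rw [show (4:ℝ) = 2 * 2 by norm_num, mul_pow]; push_cast; rfl
  rw [e]
  have hinj : Set.InjOn (fun τ : Finset ℕ × Finset ℕ × Finset ℕ => 
      (τ.1 \ τ.2.1, τ.2.1 \ τ.1, (τ.1 ∩ τ.2.1) \ τ.2.2)) 
      ((Tri u Q).filter (fun τ => eT τ = E) : Finset (Finset ℕ × Finset ℕ × Finset ℕ)) := by
    rintro ⟨S1, S2, J⟩ hτ ⟨S1', S2', J'⟩ hτ' h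
    rw [Finset.mem_coe, Finset.mem_filter, mem_Tri] at hτ hτ'
    obtain ⟨⟨_, _, hJ⟩, he⟩ := hτ
    obtain ⟨⟨_, _, hJ'⟩, he'⟩ := hτ'
    have hEE := he.trans he'.symm
    simp only [Prod.mk.injEq, Finset.ext_iff, Finset.mem_sdiff, Finset.mem_inter, eT, Finset.mem_union,
      Finset.subset_iff] at h hJ hJ' hEE ⊢
    obtain ⟨a1, a2, a3⟩ := h
    refine ⟨fun p => ?_, fun p => ?_, fun p => ?_⟩
    all_goals
      have b1 := a1 p
      have b2 := a2 p
      have b3 := a3 p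
      have b4 := hEE p
      have b5 := @hJ p
      have b6 := @hJ' p
      obtain ⟨c1, c2, c3⟩ := prop6 b1 b2 b3 b4 b5 b6
      assumption
  rw [← Finset.sum_image (f := fun y : Finset ℕ × Finset ℕ × Finset ℕ => iphi y.2.2) hinj]
  refine Finset.sum_le_sum_of_subset_of_nonneg ?_ ?_
  · intro y hy
    obtain ⟨τ, hτ, rfl⟩ := Finset.mem_image.1 hy
    obtain ⟨hT, he⟩ := Finset.mem_filter.1 hτ
    obtain ⟨m1, m2, m3⟩ := mem_Tri.1 hT
    simp only [Finset.mem_product, Finset.mem_powerset]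
    rw [← he]
    refine ⟨?_, ?_, ?_⟩
    · intro p hp; simp only [eT, Finset.mem_union]; exact Or.inl (Or.inl hp)
    · intro p hp; simp only [eT, Finset.mem_union]; exact Or.inl (Or.inr hp)
    · have hs : (τ.1 ∩ τ.2.1) \ τ.2.2 ⊆ τ.1 := Finset.sdiff_subset.trans Finset.inter_subset_left
      have := mem_SF.1 m1
      rw [mem_SF]
      exact ⟨hs.trans this.1, (mS_mono (prime_of_sub_Pr this.1) hs).trans this.2⟩
  · intro y hy _
    exact iphi_nonneg (prime_of_sub_Pr (mem_SF.1 (Finset.mem_product.1 (Finset.mem_product.1 hy).2).2).1)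

lemma AE_empty {u Q : ℕ} (hQ : 1 ≤ Q) : AE u Q ∅ = 1 := by
  have hG := GG_pos u Q hQ
  rw [AE, div_eq_one_iff_eq (by linarith), GG]
  refine Finset.sum_nbij' (fun τ => τ.1) (fun S => (S, S, ∅)) ?_ ?_ ?_ ?_ ?_
  · intro τ hτ
    exact (mem_Tri.1 (Finset.mem_filter.1 hτ).1).1
  · intro S hS
    rw [Finset.mem_filter, mem_Tri]
    exact ⟨⟨hS, hS, Finset.empty_subset _⟩, by simp [eT]⟩
  · rintro ⟨S1, S2, J⟩ hτ
    have he := (Finset.mem_filter.1 hτ).2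
    simp only [eT, Finset.union_eq_empty, Finset.sdiff_eq_empty_iff_subset] at he
    simp only [Prod.mk.injEq]
    exact ⟨trivial, Finset.Subset.antisymm he.1.1 he.1.2, he.2.symm⟩
  · intro S _; rfl
  · rintro ⟨S1, S2, J⟩ hτ
    have he := (Finset.mem_filter.1 hτ).2
    simp only [eT, Finset.union_eq_empty, Finset.sdiff_eq_empty_iff_subset] at he
    have h2 : S1 = S2 := Finset.Subset.antisymm he.1.1 he.1.2
    simp [wT, he.2, h2]

lemma kap_sub {u Q : ℕ} (hQ : 1 ≤ Q) (n : ℤ) : 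
    kap u Q n - 1 = ∑ E ∈ (EE u Q).erase ∅, AE u Q E * chiS E n := by
  have h : (∅ : Finset ℕ) ∈ EE u Q := by rw [mem_EE]; simp [mS]; exact Nat.one_le_pow _ _ hQ
  rw [kap_expand, ← Finset.add_sum_erase _ _ h, AE_empty hQ]
  simp [chiS]

lemma kap_nonneg {u Q : ℕ} (hQ : 1 ≤ Q) (n : ℤ) : 0 ≤ kap u Q n := by
  have hG := GG_pos u Q hQ
  exact div_nonneg (sq_nonneg _) (by linarith)

noncomputable def nu (w u : ℕ) (n : ℤ) : ℝ := ∏ p ∈ Pr w u, (1 + chi p n)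

lemma nu_expand (w u : ℕ) (n : ℤ) : nu w u n = ∑ R ∈ (Pr w u).powerset, chiS R n := by
  rw [nu, Finset.prod_one_add]; rfl

lemma nu_nonneg (w u : ℕ) (n : ℤ) : 0 ≤ nu w u n := by
  refine Finset.prod_nonneg fun p hp => ?_
  have := abs_le.1 (abs_chi_le (mem_Pr.1 hp).2 n)
  linarith [this.1]

lemma chi_prime {p q : ℕ} (hp : p.Prime) (hq : q.Prime) (h : q < p) : chi q p = 1 / ((q:ℝ) - 1) := by
  unfold chi
  rw [if_neg]
  rw [Int.natCast_dvd_natCast, Nat.prime_dvd_prime_iff_eq hq hp]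
  exact h.ne

lemma kap_prime {u Q p : ℕ} (hQ : 1 ≤ Q) (hp : p.Prime) (h : Q < p) : kap u Q p = GG u Q := by
  have hG := GG_pos u Q hQ
  have : ∑ S ∈ SF u Q, chiS S p = GG u Q := by
    refine Finset.sum_congr rfl fun S hS => Finset.prod_congr rfl fun q hq => ?_
    have := mem_Pr.1 ((mem_SF.1 hS).1 hq)
    exact chi_prime hp this.2 (this.1.2.trans_lt h)
  rw [kap, this, sq, mul_div_assoc, div_self (by linarith), mul_one]

lemma nu_prime {w u p : ℕ} (hp : p.Prime) (h : u < p) : nu w u p = ∏ q ∈ Pr w u, ef q := by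
  refine Finset.prod_congr rfl fun q hq => ?_
  have := mem_Pr.1 hq
  rw [chi_prime hp this.2 (this.1.2.trans_lt h), ef_eq this.2.two_le]

lemma nukap_prime {w u Q p : ℕ} (hwu : w ≤ u) (huQ : u ≤ Q) (hQ : 1 ≤ Q) (hp : p.Prime) (h : Q < p) :
    Real.log Q ≤ (∏ q ∈ Pr 0 w, ef q) * (nu w u p * kap u Q p) := by
  rw [kap_prime hQ hp h, nu_prime hp (huQ.trans_lt h)]
  have := GG_lower u Q hQ
  rw [prod_Pr_union ef (Nat.zero_le w) hwu] at this
  linarith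

/-- expansion of the sieve error -/
lemma err_expand {w u Q : ℕ} (hwu : w ≤ u) (hQ : 1 ≤ Q) : ∃ (𝓢 : Finset (Finset ℕ)) (B : Finset ℕ → ℝ),
    (∀ S ∈ 𝓢, ∀ p ∈ S, p.Prime) ∧ (∀ S ∈ 𝓢, u ≤ mS S) ∧ (∀ S ∈ 𝓢, mS S ≤ mS (Pr w u) * Q ^ 2) ∧
    (∀ S ∈ 𝓢, |B S| ≤ 4 ^ S.card) ∧ 
    ∀ n : ℤ, nu w u n * (kap u Q n - 1) = ∑ S ∈ 𝓢, B S * chiS S n := by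
  have hdis : ∀ R ⊆ Pr w u, ∀ E ⊆ Pr u Q, Disjoint R E := fun R hR E hE =>
    Finset.disjoint_of_subset_left hR (Finset.disjoint_of_subset_right hE Pr_disj)
  have hE : ∀ R ⊆ Pr w u, ∀ E ⊆ Pr u Q, (R ∪ E) ∩ Pr u Q = E := by
    intro R hR E hE
    rw [Finset.union_inter_distrib_right, Finset.disjoint_iff_inter_eq_empty.1 (hdis R hR _ le_rfl),
      Finset.inter_eq_left.2 hE, Finset.empty_union]
  have hR : ∀ R ⊆ Pr w u, ∀ E ⊆ Pr u Q, (R ∪ E) ∩ Pr w u = R := by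
    intro R hR E hE
    rw [Finset.union_inter_distrib_right, Finset.inter_comm E, Finset.disjoint_iff_inter_eq_empty.1 (hdis _ le_rfl E hE),
      Finset.inter_eq_left.2 hR, Finset.union_empty]
  set I := (Pr w u).powerset ×ˢ (EE u Q).erase ∅ with hI
  have hImem : ∀ y ∈ I, y.1 ⊆ Pr w u ∧ y.2 ⊆ Pr u Q ∧ mS y.2 ≤ Q ^ 2 ∧ y.2 ≠ ∅ := by
    intro y hy
    rw [hI, Finset.mem_product, Finset.mem_powerset, Finset.mem_erase, mem_EE] at hy
    exact ⟨hy.1, hy.2.2.1, hy.2.2.2, hy.2.1⟩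
  have hprime : ∀ y ∈ I, ∀ p ∈ y.1 ∪ y.2, p.Prime := by
    intro y hy p hp
    obtain ⟨h1, h2, h3, h4⟩ := hImem y hy
    rcases Finset.mem_union.1 hp with h | h
    · exact prime_of_sub_Pr h1 p h
    · exact prime_of_sub_Pr h2 p h
  refine ⟨I.image (fun y => y.1 ∪ y.2), fun S => AE u Q (S ∩ Pr u Q), ?_, ?_, ?_, ?_, ?_⟩
  · intro S hS
    obtain ⟨y, hy, rfl⟩ := Finset.mem_image.1 hS
    exact hprime y hy
  · intro S hS
    obtain ⟨y, hy, rfl⟩ := Finset.mem_image.1 hS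
    obtain ⟨h1, h2, h3, h4⟩ := hImem y hy
    obtain ⟨p, hp⟩ := Finset.nonempty_iff_ne_empty.2 h4
    have hpu := (mem_Pr.1 (h2 hp)).1.1
    have : mS {p} ≤ mS (y.1 ∪ y.2) := mS_mono (hprime y hy) (by
      rw [Finset.singleton_subset_iff]; exact Finset.mem_union_right _ hp)
    simp only [mS, Finset.prod_singleton] at this
    exact hpu.le.trans this
  · intro S hS
    obtain ⟨y, hy, rfl⟩ := Finset.mem_image.1 hS
    obtain ⟨h1, h2, h3, h4⟩ := hImem y hy
    refine (mS_union_le (prime_of_sub_Pr h1)).trans (Nat.mul_le_mul (mS_mono (prime_of_sub_Pr le_rfl) h1) h3)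
  · intro S hS
    refine (AE_bound hQ _).trans ?_
    exact pow_le_pow_right₀ (by norm_num) (Finset.card_le_card Finset.inter_subset_left)
  · intro n
    rw [Finset.sum_image]
    · rw [nu_expand, kap_sub hQ, Finset.sum_mul_sum, hI, Finset.sum_product]
      refine Finset.sum_congr rfl fun R mR => Finset.sum_congr rfl fun E mE => ?_
      obtain ⟨h1, h2, h3, h4⟩ := hImem (R, E) (by rw [hI, Finset.mem_product]; exact ⟨mR, mE⟩)
      simp only at h1 h2 h3 h4 ⊢
      rw [hE R h1 E h2, chiS_union (hdis R h1 E h2)]; ring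
    · intro y hy z hz h
      simp only at h
      obtain ⟨h1, h2, h3, h4⟩ := hImem y hy
      obtain ⟨k1, k2, k3, k4⟩ := hImem z hz
      have a1 := hE _ h1 _ h2
      have a2 := hE _ k1 _ k2
      have b1 := hR _ h1 _ h2
      have b2 := hR _ k1 _ k2
      rw [h] at a1 b1
      exact Prod.ext (b1.symm.trans b2) (a1.symm.trans a2)

/-- difference of sieve weights -/
lemma diff_expand {w u v : ℕ} (hwu : w ≤ u) (huv : u ≤ v) : ∃ (𝓢 : Finset (Finset ℕ)),
    (∀ S ∈ 𝓢, S ⊆ Pr w v) ∧ (∀ S ∈ 𝓢, u ≤ mS S) ∧ 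
    ∀ n : ℤ, nu w v n - nu w u n = ∑ S ∈ 𝓢, 1 * chiS S n := by
  have hsub : Pr w u ⊆ Pr w v := by
    intro p hp; rw [mem_Pr] at hp ⊢; exact ⟨⟨hp.1.1, hp.1.2.trans huv⟩, hp.2⟩
  refine ⟨(Pr w v).powerset \ (Pr w u).powerset, ?_, ?_, ?_⟩
  · intro S hS
    exact Finset.mem_powerset.1 (Finset.mem_sdiff.1 hS).1
  · intro S hS
    obtain ⟨h1, h2⟩ := Finset.mem_sdiff.1 hS
    rw [Finset.mem_powerset] at h1 h2
    obtain ⟨p, hp, hpn⟩ := Finset.not_subset.1 h2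
    have hp' := mem_Pr.1 (h1 hp)
    have hpu : u < p := by
      by_contra hcon
      exact hpn (mem_Pr.2 ⟨⟨hp'.1.1, not_lt.1 hcon⟩, hp'.2⟩)
    have : mS {p} ≤ mS S := mS_mono (prime_of_sub_Pr h1) (by rwa [Finset.singleton_subset_iff])
    simp only [mS, Finset.prod_singleton] at this
    exact hpu.le.trans this
  · intro n
    simp_rw [one_mul]
    rw [nu_expand, nu_expand, ← Finset.sum_sdiff (Finset.powerset_mono.2 hsub)]
    ring

lemma mS_Pr_le (w v : ℕ) : mS (Pr w v) ≤ 4 ^ v := by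
  refine le_trans ?_ (primorial_le_four_pow v)
  have h : mS (Pr 0 v) = primorial v := by
    rw [mS, primorial]
    refine Finset.prod_congr ?_ fun _ _ => rfl
    ext p
    simp [mem_Pr]
    intro h; have := h.pos; omega
  rw [← h]
  refine mS_mono (prime_of_sub_Pr le_rfl) ?_
  intro p hp; rw [mem_Pr] at hp ⊢; exact ⟨⟨by omega, hp.1.2⟩, hp.2⟩

end PrimeMax

namespace PrimeMax
open Finset

section Blk
set_option linter.unusedSectionVars false
variable {X : Type*} [MeasurableSpace X] {μ : Measure X} [IsProbabilityMeasure μ] {T : X → X}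

lemma periodic_mul {g : ℤ → ℝ} {K : ℕ} (hper : ∀ n, g (n + K) = g n) (b : ℕ) (n : ℤ) :
    g (n + ((K * b : ℕ) : ℤ)) = g n := by
  induction b with
  | zero => simp
  | succ b ih =>
    rw [← ih, ← hper (n + ((K * b : ℕ) : ℤ))]
    congr 1; push_cast; ring

lemma block_sum (f : X → ℝ) {g : ℤ → ℝ} {K : ℕ} (hper : ∀ n, g (n + K) = g n) (x : X) (b : ℕ) :
    ∑ n ∈ range (K * b), g n * f (T^[n] x) =
      ∑ q ∈ range b, ∑ m ∈ range K, g m * f (T^[m] ((T^[K])^[q] x)) := by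
  induction b with
  | zero => simp
  | succ b ih =>
    rw [Finset.sum_range_succ, ← ih, Nat.mul_succ, Finset.sum_range_add]
    congr 1
    refine Finset.sum_congr rfl fun m _ => ?_
    rw [← Function.iterate_mul, ← Function.iterate_add_apply, add_comm (K * b) m]
    congr 1
    rw [Nat.cast_add]
    exact periodic_mul hper b m

lemma block_le (f : X → ℝ) (hf : ∀ x, |f x| ≤ 1) {g : ℤ → ℝ} {K : ℕ} (hK : 0 < K)
    (hper : ∀ n, g (n + K) = g n) {G : ℝ} (hG : ∀ n, |g n| ≤ G) (x : X) (N : ℕ) :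
    (N:ℝ) * MM T f g N x ≤ K * (∑ q ∈ range (N / K), |MM T f g K ((T^[K])^[q] x)|) + K * G := by
  rcases Nat.eq_zero_or_pos N with h0 | hN
  · subst h0
    have : 0 ≤ G := (abs_nonneg _).trans (hG 0)
    simp only [Nat.cast_zero, zero_mul, Nat.zero_div, Finset.range_zero, Finset.sum_empty, mul_zero, zero_add]
    positivity
  have hG0 : 0 ≤ G := (abs_nonneg _).trans (hG 0)
  have hN' : (N:ℝ) ≠ 0 := by positivity
  have hK' : (K:ℝ) ≠ 0 := by positivity
  have e1 : (N:ℝ) * MM T f g N x = ∑ n ∈ range N, g n * f (T^[n] x) := by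
    rw [MM]; field_simp
  rw [e1]
  conv_lhs => rw [← Nat.div_add_mod N K, Finset.sum_range_add]
  refine add_le_add ?_ ?_
  · rw [block_sum f hper, Finset.mul_sum]
    refine Finset.sum_le_sum fun q _ => ?_
    have : ∑ m ∈ range K, g m * f (T^[m] ((T^[K])^[q] x)) = K * MM T f g K ((T^[K])^[q] x) := by
      rw [MM]; field_simp
    rw [this]
    exact mul_le_mul_of_nonneg_left (le_abs_self _) (by positivity)
  · calc _ ≤ ∑ _m ∈ range (N % K), G := by
          refine Finset.sum_le_sum fun m _ => (le_abs_self _).trans ?_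
          rw [abs_mul]
          calc _ ≤ G * 1 := mul_le_mul (hG _) (hf _) (abs_nonneg _) hG0
            _ = G := mul_one _
      _ = (N % K : ℕ) * G := by simp
      _ ≤ K * G := mul_le_mul_of_nonneg_right (by exact_mod_cast (Nat.mod_lt N hK).le) hG0

lemma MM_meas (hT : Measurable T) {f : X → ℝ} (hf : Measurable f) (g : ℤ → ℝ) (N : ℕ) :
    Measurable (MM T f g N) := by
  unfold MM
  refine Measurable.const_mul (Finset.measurable_sum _ fun n _ => ?_) _
  exact (hf.comp (hT.iterate n)).const_mul _

lemma MM_bdd {f : X → ℝ} (hf : ∀ x, |f x| ≤ 1) (g : ℤ → ℝ) (N : ℕ) : 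
    ∃ c, ∀ x, |MM T f g N x| ≤ c := by
  refine ⟨|1 / (N:ℝ)| * ∑ n ∈ range N, |g n|, fun x => ?_⟩
  rw [MM, abs_mul]
  refine mul_le_mul_of_nonneg_left ((Finset.abs_sum_le_sum_abs _ _).trans (Finset.sum_le_sum fun n _ => ?_)) (abs_nonneg _)
  rw [abs_mul]
  exact mul_le_of_le_one_right (abs_nonneg _) (hf _)

lemma block_max (hT : MeasurePreserving T μ μ) {f : X → ℝ} (hfm : Measurable f) (hf : ∀ x, |f x| ≤ 1)
    {g : ℤ → ℝ} {K : ℕ} (hK : 0 < K) (hper : ∀ n, g (n + K) = g n) {G : ℝ} (hG : ∀ n, |g n| ≤ G)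
    {s v : ℝ} (hs : 0 < s) {N0 : ℕ} (hN0 : 2 * (K * G) ≤ s * N0) (hv : ∫ x, |MM T f g K x| ∂μ ≤ v) :
    μ {x | ∃ N : ℕ, N0 ≤ N ∧ s < MM T f g N x} ≤ ENNReal.ofReal (2 * v / s) := by
  obtain ⟨c, hc⟩ := MM_bdd (T := T) hf g K
  have h1 := maximal_ergodic (μ := μ) (T := T^[K]) (F := fun x => |MM T f g K x|) (c := c) (s := s / 2)
    (hT.iterate K) (MM_meas hT.measurable hfm g K).abs (fun x => abs_nonneg _) 
    (fun x => by rw [abs_abs]; exact hc x) (by linarith)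
  refine (measure_mono ?_).trans (h1.trans (ENNReal.ofReal_le_ofReal ?_))
  · rintro x ⟨N, hN, hsx⟩
    refine ⟨N / K, ?_⟩
    have h2 := block_le (T := T) f hf hK hper hG x N
    rcases Nat.eq_zero_or_pos N with h0 | hNp
    · subst h0
      simp [MM] at hsx
      linarith
    have hNp' : (0:ℝ) < N := by exact_mod_cast hNp
    have hNN : (N0:ℝ) ≤ N := by exact_mod_cast hN
    have h3 : (N:ℝ) * s < N * MM T f g N x := mul_lt_mul_of_pos_left hsx hNp'
    have h4 : s * N0 ≤ s * N := mul_le_mul_of_nonneg_left hNN hs.le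
    have h5 : ((K * (N / K) : ℕ) : ℝ) ≤ N := by exact_mod_cast Nat.mul_div_le N K
    rw [Nat.cast_mul] at h5
    have hKp : (0:ℝ) < K := by exact_mod_cast hK
    refine lt_of_mul_lt_mul_left ?_ hKp.le
    calc (K:ℝ) * (s / 2 * ((N / K : ℕ):ℝ)) = s / 2 * (K * ((N / K : ℕ):ℝ)) := by ring
      _ ≤ s / 2 * N := mul_le_mul_of_nonneg_left h5 (by linarith)
      _ < _ := by linarith
  · rw [div_le_div_iff₀ (by linarith) hs]
    nlinarith

lemma iUnion_geo (E : ℕ → Set X) {c : ℝ} (hc : 0 ≤ c) 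
    (h : ∀ i, μ (E i) ≤ ENNReal.ofReal (c * (1/2) ^ i)) : μ (⋃ i, E i) ≤ ENNReal.ofReal (c * 2) := by
  refine (measure_iUnion_le _).trans ((ENNReal.tsum_le_tsum h).trans ?_)
  rw [← ENNReal.ofReal_tsum_of_nonneg (fun n => by positivity) (summable_geometric_two.mul_left c), tsum_mul_left,
    tsum_geometric_two]

end Blk
end PrimeMax

namespace PrimeMax
open Finset

lemma nu_le (w u : ℕ) (n : ℤ) : nu w u n ≤ mS (Pr w u) := by
  rw [nu, mS, Nat.cast_prod]
  refine Finset.prod_le_prod (fun p hp => ?_) (fun p hp => ?_)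
  · have := abs_le.1 (abs_chi_le (mem_Pr.1 hp).2 n)
    linarith [this.1]
  · have := abs_le.1 (abs_chi_le (mem_Pr.1 hp).2 n)
    have h2 : (2:ℝ) ≤ p := by exact_mod_cast (mem_Pr.1 hp).2.two_le
    linarith [this.2]

lemma Pr_mono_right {w u v : ℕ} (h : u ≤ v) : Pr w u ⊆ Pr w v := by
  intro p hp; rw [mem_Pr] at hp ⊢; exact ⟨⟨hp.1.1, hp.1.2.trans h⟩, hp.2⟩

lemma nu_diff_abs {w u v : ℕ} (h : u ≤ v) (n : ℤ) : |nu w v n - nu w u n| ≤ mS (Pr w v) := by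
  have h1 := nu_le w u n
  have h2 := nu_le w v n
  have h3 : (mS (Pr w u) : ℝ) ≤ mS (Pr w v) := by
    exact_mod_cast mS_mono (prime_of_sub_Pr le_rfl) (Pr_mono_right h)
  rw [abs_le]
  constructor <;> linarith [nu_nonneg w u n, nu_nonneg w v n]

lemma chi_per {p : ℕ} {t : ℤ} (h : (p:ℤ) ∣ t) (n : ℤ) : chi p (n + t) = chi p n := by
  have : chiS {p} (n + t) = chiS {p} n := chiS_add (by simpa using h) n
  simpa [chiS] using this

lemma nu_per {w u : ℕ} {t : ℤ} (h : ((mS (Pr w u) : ℕ) : ℤ) ∣ t) (n : ℤ) : nu w u (n + t) = nu w u n := by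
  refine Finset.prod_congr rfl fun p hp => ?_
  rw [chi_per]
  refine dvd_trans ?_ h
  rw [Int.natCast_dvd_natCast]
  exact Finset.dvd_prod_of_mem _ hp

lemma size1 (i : ℕ) (hi : 8 ≤ i) : 36 * 256 ^ (i+1) + i + 4 ≤ 512 ^ (i+1) := by
  have h1 : 512 ^ (i+1) = 2 ^ (i+1) * 256 ^ (i+1) := by rw [← mul_pow]; norm_num
  have h2 : 2 ^ 9 ≤ 2 ^ (i+1) := Nat.pow_le_pow_right (by norm_num) (by omega)
  have h3 : i + 1 < 256 ^ (i+1) := Nat.lt_pow_self (by norm_num)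
  rw [h1]
  have := Nat.mul_le_mul_right (256 ^ (i+1)) h2
  omega

section Gm
set_option linter.unusedSectionVars false
variable {X : Type*} [MeasurableSpace X] {μ : Measure X} [IsProbabilityMeasure μ] {T : X → X} {A : Set X}

lemma ind_abs (x : X) : |(A.indicator 1 x : ℝ)| ≤ 1 := by
  by_cases h : x ∈ A <;> simp [h]

lemma ind_meas (hA : MeasurableSet A) : Measurable (A.indicator (1 : X → ℝ)) :=
  measurable_one.indicator hA

lemma gi_meas (hT : MeasurePreserving T μ μ) (hA : MeasurableSet A) {j0 : ℕ} (hj : 8 ≤ j0) 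
    (hα : (1/2:ℝ) ^ j0 ≤ μ.real A) {s : ℝ} (hs : μ.real A ≤ s) (k : ℕ) :
    μ {x | ∃ n : ℕ, 512 ^ (j0 + k + 1) ≤ n ∧ (s/3) * (1/2) ^ (k+1) < 
      MM T (A.indicator 1) (fun m => nu (256 ^ j0) (256 ^ (j0 + k + 1)) m - nu (256 ^ j0) (256 ^ (j0 + k)) m) (2 ^ n) x} 
    ≤ ENNReal.ofReal (12 * C0 * μ.real A / s * (1/2) ^ k) := by
  have hαpos : 0 < μ.real A := lt_of_lt_of_le (by positivity) hα
  have hspos : 0 < s := hαpos.trans_le hs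
  set i := j0 + k with hi
  have huv : 256 ^ i ≤ 256 ^ (i+1) := Nat.pow_le_pow_right (by norm_num) (by omega)
  have hwu : 256 ^ j0 ≤ 256 ^ i := Nat.pow_le_pow_right (by norm_num) (by omega)
  obtain ⟨𝓢, hS1, hS2, hS3⟩ := diff_expand hwu huv
  set W := mS (Pr (256 ^ j0) (256 ^ (i+1))) with hW
  have hWpos : 0 < W := mS_pos (prime_of_sub_Pr le_rfl)
  have hWle : W ≤ 4 ^ (256 ^ (i+1)) := mS_Pr_le _ _
  set g : ℤ → ℝ := fun m => nu (256 ^ j0) (256 ^ (i + 1)) m - nu (256 ^ j0) (256 ^ i) m with hg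
  have hge : g = fun n => ∑ S ∈ 𝓢, (fun _ => (1:ℝ)) S * chiS S n := funext hS3
  have hC := C0_pos
  have hL2 : ∫ x, (MM T (A.indicator 1) g (W ^ 17) x) ^ 2 ∂μ ≤ C0 * μ.real A / ((4 ^ i : ℕ) : ℝ) ^ 5 := by
    rw [hge]
    refine L2_main hT hA hαpos 𝓢 W (W ^ 17) (4 ^ i) (fun _ => (1:ℝ)) (Nat.one_le_pow _ _ (by norm_num)) ?_ ?_ ?_ le_rfl ?_
    · intro S hS; exact prime_of_sub_Pr (hS1 S hS)
    · intro S hS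
      have := hS2 S hS
      rwa [← pow_mul, mul_comm i 4, pow_mul]
    · intro S hS; exact mS_mono (prime_of_sub_Pr le_rfl) (hS1 S hS)
    · intro S hS; simp only [abs_one]; exact one_le_pow₀ (by norm_num)
  obtain ⟨c, hc⟩ := MM_bdd (T := T) (f := A.indicator 1) ind_abs g (W ^ 17)
  have hL1 : ∫ x, |MM T (A.indicator 1) g (W ^ 17) x| ∂μ ≤ C0 * μ.real A * (1/16) ^ i := by
    refine l1_le (MM_meas hT.measurable (ind_meas hA) g _) hc (by positivity) (hL2.trans ?_)
    have e : (((4 ^ i : ℕ) : ℝ) ^ 5) = 1024 ^ i := by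
      push_cast; rw [← pow_mul, mul_comm, pow_mul]; norm_num
    rw [e, div_eq_mul_inv, ← inv_pow]
    have h1 : (1024:ℝ)⁻¹ ^ i ≤ (1/2) ^ j0 * ((1/16) ^ i) ^ 2 := by
      have : ((1024:ℝ)⁻¹) ^ i = (1/2) ^ i * (1/2) ^ i * ((1/16) ^ i) ^ 2 := by
        rw [sq, ← mul_pow, ← mul_pow, ← mul_pow]; norm_num
      rw [this]
      refine mul_le_mul_of_nonneg_right ?_ (by positivity)
      calc (1/2:ℝ) ^ i * (1/2) ^ i ≤ (1/2) ^ i * 1 := by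
            refine mul_le_mul_of_nonneg_left (pow_le_one₀ (by norm_num) (by norm_num)) (by positivity)
        _ ≤ (1/2) ^ j0 := by
            rw [mul_one]; exact pow_le_pow_of_le_one (by norm_num) (by norm_num) (by omega)
    calc C0 * μ.real A * (1024:ℝ)⁻¹ ^ i ≤ C0 * μ.real A * (μ.real A * ((1/16) ^ i) ^ 2) := by
          refine mul_le_mul_of_nonneg_left (h1.trans (mul_le_mul_of_nonneg_right hα (by positivity))) (by positivity)
      _ = C0 * (μ.real A * ((1/16) ^ i)) ^ 2 := by ring
      _ ≤ C0 ^ 2 * (μ.real A * ((1/16) ^ i)) ^ 2 := by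
          refine mul_le_mul_of_nonneg_right ?_ (by positivity)
          nlinarith
      _ = _ := by ring
  have hper : ∀ n, g (n + ((W ^ 17 : ℕ) : ℤ)) = g n := by
    intro n
    have hd : ((W : ℕ) : ℤ) ∣ ((W ^ 17 : ℕ) : ℤ) := by
      rw [Int.natCast_dvd_natCast]; exact dvd_pow_self _ (by norm_num)
    simp only [hg]
    rw [nu_per hd, nu_per]
    refine dvd_trans ?_ hd
    rw [Int.natCast_dvd_natCast]
    exact Finset.prod_dvd_prod_of_subset _ _ _ (Pr_mono_right huv)
  have hs' : 0 < (s/3) * (1/2) ^ (k+1) := by positivity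
  have hN0 : 2 * (((W ^ 17 : ℕ) : ℝ) * W) ≤ (s/3) * (1/2) ^ (k+1) * ((2 ^ (512 ^ (i+1)) : ℕ) : ℝ) := by
    have h1 : (1/2:ℝ) ^ (i + 3) ≤ (s/3) * (1/2) ^ (k+1) := by
      have : (1/2:ℝ) ^ (i+3) = (1/2) ^ j0 * (1/2) ^ (k+1) * (1/4) := by
        rw [hi, pow_add, pow_add, pow_succ _ k]; ring
      rw [this]
      have h3 := hα.trans hs
      have h4 : (0:ℝ) < (1/2) ^ (k+1) := by positivity
      nlinarith [mul_le_mul_of_nonneg_right h3 h4.le, mul_pos hspos h4]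
    refine le_trans ?_ (mul_le_mul_of_nonneg_right h1 (by positivity))
    have h2 : 2 * (W ^ 17 * W) * 2 ^ (i+3) ≤ 2 ^ (512 ^ (i+1)) := by
      calc 2 * (W ^ 17 * W) * 2 ^ (i+3) = W ^ 18 * 2 ^ (i+4) := by ring
        _ ≤ (4 ^ (256 ^ (i+1))) ^ 18 * 2 ^ (i+4) := Nat.mul_le_mul_right _ (Nat.pow_le_pow_left hWle _)
        _ = 2 ^ (36 * 256 ^ (i+1) + (i + 4)) := by
            rw [show 4 = 2 ^ 2 by norm_num, ← pow_mul, ← pow_mul, ← pow_add]; congr 1; ring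
        _ ≤ _ := Nat.pow_le_pow_right (by norm_num) (by have := size1 i (by omega); omega)
    have h2' : 2 * ((W:ℝ) ^ 17 * W) * 2 ^ (i+3) ≤ 2 ^ (512 ^ (i+1)) := by exact_mod_cast h2
    rw [one_div, inv_pow, inv_mul_eq_div, le_div_iff₀ (by positivity)]
    push_cast
    exact h2'
  have hmain := block_max (μ := μ) hT (ind_meas hA) ind_abs (K := W ^ 17) (by positivity) hper 
    (G := W) (fun n => nu_diff_abs huv n) hs' hN0 hL1
  refine (measure_mono ?_).trans (hmain.trans (ENNReal.ofReal_le_ofReal ?_))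
  · rintro x ⟨n, hn, hx⟩
    exact ⟨2 ^ n, Nat.pow_le_pow_right (by norm_num) hn, hx⟩
  · have h1 : (1/16:ℝ) ^ i ≤ (1/2) ^ k * (1/2) ^ k := by
      rw [← mul_pow]
      calc (1/16:ℝ) ^ i ≤ (1/16) ^ k := pow_le_pow_of_le_one (by norm_num) (by norm_num) (by omega)
        _ ≤ _ := pow_le_pow_left₀ (by norm_num) (by norm_num) _
    rw [div_le_iff₀ hs']
    have : 12 * C0 * μ.real A / s * (1 / 2) ^ k * (s / 3 * (1 / 2) ^ (k + 1)) = 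
        2 * (C0 * μ.real A * ((1/2) ^ k * (1/2) ^ k)) := by
      rw [pow_succ]; field_simp; ring
    rw [this]
    refine mul_le_mul_of_nonneg_left (mul_le_mul_of_nonneg_left h1 (by positivity)) (by norm_num)

lemma size2 {n j : ℕ} (hj : 9 ≤ j) (h : 512 ^ j ≤ n) : 2 * 256 ^ j ≤ n / 64 := by
  have h1 : 512 ^ j = 2 ^ j * 256 ^ j := by rw [← mul_pow]; norm_num
  have h2 : 2 ^ 9 ≤ 2 ^ j := Nat.pow_le_pow_right (by norm_num) hj
  have := Nat.mul_le_mul_right (256 ^ j) h2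
  rw [Nat.le_div_iff_mul_le (by norm_num)]
  omega

lemma Pr_self (w : ℕ) : Pr w w = ∅ := by
  ext p; rw [mem_Pr]; constructor
  · rintro ⟨h, _⟩; omega
  · intro h; simp at h

lemma W_le {n j0 j : ℕ} (hj0 : 8 ≤ j0) (hj : j0 ≤ j) (h : j = j0 ∨ 512 ^ j ≤ n) :
    mS (Pr (256 ^ j0) (256 ^ j)) ≤ 2 ^ (n/64) := by
  rcases eq_or_ne j j0 with h1 | h1
  · rw [h1, Pr_self]; simp only [mS, Finset.prod_empty]; exact Nat.one_le_two_pow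
  · have h2 := h.resolve_left h1
    refine (mS_Pr_le _ _).trans ?_
    rw [show 4 = 2 ^ 2 by norm_num, ← pow_mul]
    exact Nat.pow_le_pow_right (by norm_num) (size2 (by omega) h2)

lemma err_meas (hT : MeasurePreserving T μ μ) (hA : MeasurableSet A) {j0 j n : ℕ} (hj0 : 8 ≤ j0) 
    (hαpos : 0 < μ.real A) {s : ℝ} (hs : 0 < s) (hj : j0 ≤ j) (h : j = j0 ∨ 512 ^ j ≤ n) :
    μ {x | s / 3 < MM T (A.indicator 1) (fun m => nu (256 ^ j0) (256 ^ j) m * (kap (256 ^ j) (2 ^ (n/64)) m - 1)) (2 ^ n) x} 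
    ≤ ENNReal.ofReal (9 * C0 * μ.real A / s ^ 2 * (1/1024) ^ j) := by
  have hwu : 256 ^ j0 ≤ 256 ^ j := Nat.pow_le_pow_right (by norm_num) hj
  obtain ⟨𝓢, B, b1, b2, b3, b4, b5⟩ := err_expand (Q := 2 ^ (n/64)) hwu Nat.one_le_two_pow
  rw [show (fun m : ℤ => nu (256 ^ j0) (256 ^ j) m * (kap (256 ^ j) (2 ^ (n/64)) m - 1)) = _ from funext b5]
  have hL2 := L2_main (N := 2 ^ n) (D := (2 ^ (n/64)) ^ 3) (t := 4 ^ j) hT hA hαpos 𝓢 B (Nat.one_le_pow _ _ (by norm_num)) b1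
    (fun S hS => by have := b2 S hS; rwa [← pow_mul, mul_comm j 4, pow_mul]) 
    (fun S hS => (b3 S hS).trans (by
      rw [pow_succ _ 2, mul_comm]; exact Nat.mul_le_mul_left _ (W_le hj0 hj h)))
    (by rw [← pow_mul, ← pow_mul]; exact Nat.pow_le_pow_right (by norm_num) (by omega)) b4
  obtain ⟨c, hc⟩ := MM_bdd (T := T) (f := A.indicator 1) ind_abs (fun n => ∑ S ∈ 𝓢, B S * chiS S n) (2 ^ n)
  refine (cheb (MM_meas hT.measurable (ind_meas hA) _ _) hc (by positivity : 0 < s / 3) hL2).trans 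
    (ENNReal.ofReal_le_ofReal (le_of_eq ?_))
  have e : (((4 ^ j : ℕ) : ℝ) ^ 5) = 1024 ^ j := by
    push_cast; rw [← pow_mul, mul_comm, pow_mul]; norm_num
  rw [e, one_div, inv_pow]
  field_simp
  ring

/-- the union of all the error events -/
lemma err_all (hT : MeasurePreserving T μ μ) (hA : MeasurableSet A) {j0 : ℕ} (hj0 : 8 ≤ j0) 
    (hα : (1/2:ℝ) ^ j0 ≤ μ.real A) {s : ℝ} (hs : μ.real A ≤ s) (k : ℕ) :
    μ {x | ∃ n : ℕ, n < 512 ^ (j0 + k + 1) ∧ (j0 + k = j0 ∨ 512 ^ (j0 + k) ≤ n) ∧ s / 3 < MM T (A.indicator 1) 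
      (fun m => nu (256 ^ j0) (256 ^ (j0 + k)) m * (kap (256 ^ (j0 + k)) (2 ^ (n/64)) m - 1)) (2 ^ n) x} 
    ≤ ENNReal.ofReal (4608 * C0 * μ.real A / s * (1/2) ^ k) := by
  have hαpos : 0 < μ.real A := lt_of_lt_of_le (by positivity) hα
  have hspos : 0 < s := hαpos.trans_le hs
  have hC := C0_pos
  set j := j0 + k with hj
  set b := 9 * C0 * μ.real A / s ^ 2 * (1/1024) ^ j with hb
  have hsub : {x | ∃ n : ℕ, n < 512 ^ (j + 1) ∧ (j = j0 ∨ 512 ^ j ≤ n) ∧ s / 3 < MM T (A.indicator 1) 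
      (fun m => nu (256 ^ j0) (256 ^ j) m * (kap (256 ^ j) (2 ^ (n/64)) m - 1)) (2 ^ n) x} ⊆
      ⋃ n ∈ (range (512 ^ (j+1))).filter (fun n => j = j0 ∨ 512 ^ j ≤ n), {x | s / 3 < MM T (A.indicator 1) 
      (fun m => nu (256 ^ j0) (256 ^ j) m * (kap (256 ^ j) (2 ^ (n/64)) m - 1)) (2 ^ n) x} := by
    rintro x ⟨n, h1, h2, h3⟩
    rw [Set.mem_iUnion₂]
    exact ⟨n, Finset.mem_filter.2 ⟨Finset.mem_range.2 h1, h2⟩, h3⟩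
  refine (measure_mono hsub).trans ((measure_biUnion_finset_le _ _).trans ?_)
  refine (Finset.sum_le_sum fun n hn => err_meas hT hA hj0 hαpos hspos (by omega) (Finset.mem_filter.1 hn).2).trans ?_
  rw [Finset.sum_const, nsmul_eq_mul, ← hb]
  have hb0 : 0 ≤ b := by positivity
  have hcard : ((((range (512 ^ (j+1))).filter (fun n => j = j0 ∨ 512 ^ j ≤ n)).card : ℕ) : ℝ) ≤ 512 ^ (j+1) := by
    have := Finset.card_filter_le (range (512 ^ (j+1))) (fun n => j = j0 ∨ 512 ^ j ≤ n)
    rw [Finset.card_range] at this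
    exact_mod_cast this
  rw [← ENNReal.ofReal_natCast, ← ENNReal.ofReal_mul (by positivity)]
  refine ENNReal.ofReal_le_ofReal ((mul_le_mul_of_nonneg_right hcard hb0).trans ?_)
  have e1 : (512:ℝ) ^ (j+1) * b = 4608 * C0 * μ.real A / s ^ 2 * ((1/2) ^ j0 * (1/2) ^ k) := by
    have : (1/2:ℝ) ^ j0 * (1/2) ^ k = 512 ^ j * (1/1024) ^ j := by
      rw [← pow_add, ← hj, ← mul_pow]; norm_num
    rw [this, hb, pow_succ]; ring
  rw [e1]
  have h4 := hα.trans hs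
  calc 4608 * C0 * μ.real A / s ^ 2 * ((1/2) ^ j0 * (1/2) ^ k) ≤ 4608 * C0 * μ.real A / s ^ 2 * (s * (1/2) ^ k) := by
        gcongr
    _ = _ := by field_simp

end Gm
end PrimeMax

namespace PrimeMax
open Finset

section Ptw
variable {X : Type*} {T : X → X} {A : Set X}

lemma ind_nonneg (x : X) : 0 ≤ (A.indicator 1 x : ℝ) := by
  by_cases h : x ∈ A <;> simp [h]

lemma ind_le_one (x : X) : (A.indicator 1 x : ℝ) ≤ 1 := by
  by_cases h : x ∈ A <;> simp [h]

lemma MM_eq (f : X → ℝ) (g : ℤ → ℝ) (n : ℕ) (x : X) :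
    ∑ m ∈ range (2 ^ n), g m * f (T^[m] x) = 2 ^ n * MM T f g (2 ^ n) x := by
  rw [MM]; push_cast; field_simp

lemma MM_nonneg {f : X → ℝ} (hf : ∀ x, 0 ≤ f x) {g : ℤ → ℝ} (hg : ∀ m, 0 ≤ g m) (N : ℕ) (x : X) : 
    0 ≤ MM T f g N x := by
  rw [MM]
  exact mul_nonneg (by positivity) (Finset.sum_nonneg fun m _ => mul_nonneg (hg _) (hf _))

lemma erg_le (N : ℕ) (hN : 2 ≤ N) (x : X) : ergAvg T (A.indicator 1) N x ≤
    20 * ((Nat.log 2 N + 1 : ℕ) : ℝ) / 2 ^ (Nat.log 2 N + 1) * ∑ p ∈ primesUpTo N, (A.indicator 1 (T^[p] x) : ℝ) := by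
  rw [ergAvg]
  refine mul_le_mul_of_nonneg_right ?_ (Finset.sum_nonneg fun p _ => ind_nonneg _)
  set n := Nat.log 2 N + 1 with hn
  have h1 := card_primes_lower N hN
  have h2 : N < 2 ^ n := Nat.lt_pow_succ_log_self (by norm_num) N
  have h3 : 2 ^ n ≤ 2 * N := by
    rw [hn, pow_succ, mul_comm]; exact Nat.mul_le_mul_left _ (Nat.pow_log_le_self 2 (by omega))
  have h2' : (N:ℝ) ≤ 2 ^ n := by exact_mod_cast h2.le
  have h3' : (2:ℝ) ^ n ≤ 2 * N := by exact_mod_cast h3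
  have hNp : (0:ℝ) < N := by exact_mod_cast (by omega : 0 < N)
  have h4 : Real.log N ≤ n := by
    calc Real.log N ≤ Real.log (2 ^ n) := Real.log_le_log hNp h2'
      _ = n * Real.log 2 := Real.log_pow _ _
      _ ≤ n * 1 := mul_le_mul_of_nonneg_left (by linarith [Real.log_two_lt_d9]) (by positivity)
      _ = n := mul_one _
  have h5 : (1/10:ℝ) * N ≤ (primesUpTo N).card * n := 
    h1.trans (mul_le_mul_of_nonneg_left h4 (by positivity))
  have hcp : (0:ℝ) < (primesUpTo N).card := by
    by_contra hc
    have : ((primesUpTo N).card : ℝ) = 0 := le_antisymm (not_lt.1 hc) (by positivity)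
    rw [this] at h5; linarith
  rw [inv_eq_one_div, div_le_div_iff₀ hcp (by positivity)]
  linarith

lemma pt_small (N : ℕ) (hN : 2 ≤ N) (x : X) {j0 : ℕ} (hn : Nat.log 2 N + 1 ≤ 1024 * j0) :
    ergAvg T (A.indicator 1) N x ≤ 20480 * j0 * MM T (A.indicator 1) (fun _ => 1) (2 ^ (Nat.log 2 N + 1)) x := by
  refine (erg_le N hN x).trans ?_
  set n := Nat.log 2 N + 1 with hnd
  have h2 : N < 2 ^ n := Nat.lt_pow_succ_log_self (by norm_num) N
  have h3 : ∑ p ∈ primesUpTo N, (A.indicator 1 (T^[p] x) : ℝ) ≤ 2 ^ n * MM T (A.indicator 1) (fun _ => 1) (2 ^ n) x := by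
    rw [← MM_eq]
    simp only [one_mul]
    refine Finset.sum_le_sum_of_subset_of_nonneg ?_ fun _ _ _ => ind_nonneg _
    intro p hp
    rw [primesUpTo, Finset.mem_filter, Finset.mem_range] at hp
    rw [Finset.mem_range]; omega
  have hM : 0 ≤ MM T (A.indicator 1) (fun _ => 1) (2 ^ n) x := MM_nonneg ind_nonneg (fun _ => zero_le_one) _ _
  have hn' : (n:ℝ) ≤ 1024 * j0 := by exact_mod_cast hn
  calc _ ≤ 20 * (n:ℝ) / 2 ^ n * (2 ^ n * MM T (A.indicator 1) (fun _ => 1) (2 ^ n) x) := 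
        mul_le_mul_of_nonneg_left h3 (by positivity)
    _ = 20 * (n:ℝ) * MM T (A.indicator 1) (fun _ => 1) (2 ^ n) x := by field_simp
    _ ≤ _ := mul_le_mul_of_nonneg_right (by linarith) hM

lemma V_le {j0 : ℕ} (hj0 : 8 ≤ j0) : ∏ q ∈ Pr 0 (256 ^ j0), ef q ≤ 1024 * (j0:ℝ) ^ 2 := by
  have h := V_bound (8 * j0) (by omega)
  rw [pow_mul] at h
  norm_num at h
  refine h.trans ?_
  have h1 : Real.exp 2 ≤ 8 := by
    have : Real.exp 2 = Real.exp 1 * Real.exp 1 := by rw [← Real.exp_add]; norm_num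
    have h2 := Real.exp_one_lt_d9
    have h3 := Real.exp_pos 1
    rw [this]; nlinarith
  nlinarith [sq_nonneg (j0:ℝ)]

lemma size3 {n j0 : ℕ} (hj0 : 8 ≤ j0) (hn : 1024 * j0 ≤ n) : n * (2 ^ (n/64) + 1) * 2 ^ j0 ≤ 2 * 2 ^ n := by
  have h1 : n ≤ 2 ^ (n/2 + 1) := by
    have : n/2 < 2 ^ (n/2) := Nat.lt_two_pow_self
    rw [pow_succ]; omega
  have h2 : 2 ^ (n/64) + 1 ≤ 2 ^ (n/64 + 1) := by
    have : 1 ≤ 2 ^ (n/64) := Nat.one_le_two_pow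
    rw [pow_succ]; omega
  calc n * (2 ^ (n/64) + 1) * 2 ^ j0 ≤ 2 ^ (n/2+1) * 2 ^ (n/64+1) * 2 ^ j0 := 
        Nat.mul_le_mul_right _ (Nat.mul_le_mul h1 h2)
    _ = 2 ^ (n/2 + 1 + (n/64 + 1) + j0) := by rw [← pow_add, ← pow_add]
    _ ≤ 2 ^ n := Nat.pow_le_pow_right (by norm_num) (by omega)
    _ ≤ _ := by omega

lemma pt_large (N : ℕ) (hN : 2 ≤ N) (x : X) {j0 j : ℕ} (hj0 : 8 ≤ j0) (hn : 1024 * j0 ≤ Nat.log 2 N + 1) 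
    (hj : j0 ≤ j) (h : j = j0 ∨ 512 ^ j ≤ Nat.log 2 N + 1) :
    ergAvg T (A.indicator 1) N x ≤ 40 * (1/2) ^ j0 + 5242880 * (j0:ℝ) ^ 2 * MM T (A.indicator 1) 
      (fun m => nu (256 ^ j0) (256 ^ j) m * kap (256 ^ j) (2 ^ ((Nat.log 2 N + 1)/64)) m) (2 ^ (Nat.log 2 N + 1)) x := by
  refine (erg_le N hN x).trans ?_
  set n := Nat.log 2 N + 1 with hnd
  have h2 : N < 2 ^ n := Nat.lt_pow_succ_log_self (by norm_num) N
  set Q := 2 ^ (n/64) with hQ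
  have hQ1 : 1 ≤ Q := Nat.one_le_two_pow
  have hwu : 256 ^ j0 ≤ 256 ^ j := Nat.pow_le_pow_right (by norm_num) hj
  have huQ : 256 ^ j ≤ Q := by
    rw [show 256 = 2 ^ 8 by norm_num, ← pow_mul, hQ]
    refine Nat.pow_le_pow_right (by norm_num) ?_
    rcases eq_or_ne j j0 with h1 | h1
    · omega
    · have h3 := h.resolve_left h1
      have h4 := size2 (by omega) h3
      have h5 : j < 2 ^ j := Nat.lt_two_pow_self
      have h6 : 256 ^ j = 128 ^ j * 2 ^ j := by rw [← mul_pow]; norm_num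
      have h7 : 128 ^ 1 ≤ 128 ^ j := Nat.pow_le_pow_right (by norm_num) (by omega)
      have h8 := Nat.mul_le_mul_right (2 ^ j) h7
      omega
  set G : ℤ → ℝ := fun m => nu (256 ^ j0) (256 ^ j) m * kap (256 ^ j) Q m with hG
  have hG0 : ∀ m, 0 ≤ G m := fun m => mul_nonneg (nu_nonneg _ _ _) (kap_nonneg hQ1 _)
  have hV := V_le hj0
  set V := ∏ q ∈ Pr 0 (256 ^ j0), ef q with hVd
  have hlog : (n:ℝ) / 256 ≤ Real.log Q := by
    rw [hQ]; push_cast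
    rw [Real.log_pow]
    have h1 : (n:ℝ) ≤ 128 * ((n/64 : ℕ):ℝ) := by
      have : n ≤ 128 * (n/64) := by omega
      exact_mod_cast this
    have h3 := Real.log_two_gt_d9
    have h4 : (0:ℝ) ≤ ((n/64 : ℕ):ℝ) := by positivity
    nlinarith
  have hnp : (0:ℝ) < n := by exact_mod_cast (by omega : 0 < n)
  have hterm : ∀ p ∈ primesUpTo N, (A.indicator 1 (T^[p] x) : ℝ) ≤ 
      (if p ≤ Q then 1 else 0) + 262144 * (j0:ℝ) ^ 2 / n * (G p * A.indicator 1 (T^[p] x)) := by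
    intro p hp
    rw [primesUpTo, Finset.mem_filter] at hp
    have hnn : 0 ≤ 262144 * (j0:ℝ) ^ 2 / n * (G p * A.indicator 1 (T^[p] x)) := 
      mul_nonneg (by positivity) (mul_nonneg (hG0 p) (ind_nonneg _))
    split_ifs with hpQ
    · linarith [ind_le_one (A := A) (T^[p] x)]
    · rw [zero_add]
      have h3 := nukap_prime (w := 256 ^ j0) hwu huQ hQ1 hp.2 (not_le.1 hpQ)
      have h4 : (n:ℝ) / 256 ≤ 1024 * (j0:ℝ) ^ 2 * G p := 
        hlog.trans (h3.trans (mul_le_mul_of_nonneg_right hV (hG0 p)))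
      have h5 : 1 ≤ 262144 * (j0:ℝ) ^ 2 / n * G p := by
        rw [div_mul_eq_mul_div, le_div_iff₀ hnp]; linarith
      calc (A.indicator 1 (T^[p] x) : ℝ) ≤ (262144 * (j0:ℝ) ^ 2 / n * G p) * A.indicator 1 (T^[p] x) :=
            le_mul_of_one_le_left (ind_nonneg _) h5
        _ = _ := by ring
  have hsum := Finset.sum_le_sum hterm
  rw [Finset.sum_add_distrib, ← Finset.mul_sum] at hsum
  have hs1 : ∑ p ∈ primesUpTo N, (if p ≤ Q then (1:ℝ) else 0) ≤ Q + 1 := by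
    rw [← Finset.sum_filter, Finset.sum_const, nsmul_eq_mul, mul_one]
    have : ((primesUpTo N).filter (fun p => p ≤ Q)) ⊆ range (Q + 1) := by
      intro p hp
      rw [Finset.mem_filter] at hp
      rw [Finset.mem_range]; omega
    have := Finset.card_le_card this
    rw [Finset.card_range] at this
    exact_mod_cast this
  have hs2 : ∑ p ∈ primesUpTo N, (G p * A.indicator 1 (T^[p] x)) ≤ 2 ^ n * MM T (A.indicator 1) G (2 ^ n) x := by
    rw [← MM_eq]
    refine Finset.sum_le_sum_of_subset_of_nonneg ?_ fun p _ _ => mul_nonneg (hG0 _) (ind_nonneg _)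
    intro p hp
    rw [primesUpTo, Finset.mem_filter, Finset.mem_range] at hp
    rw [Finset.mem_range]; omega
  have h6 : ∑ p ∈ primesUpTo N, (A.indicator 1 (T^[p] x) : ℝ) ≤ (Q + 1) + 
      262144 * (j0:ℝ) ^ 2 / n * (2 ^ n * MM T (A.indicator 1) G (2 ^ n) x) :=
    hsum.trans (add_le_add hs1 (mul_le_mul_of_nonneg_left hs2 (by positivity)))
  have h7 : (n:ℝ) * (Q + 1) * 2 ^ j0 ≤ 2 * 2 ^ n := by exact_mod_cast size3 hj0 hn
  calc _ ≤ 20 * (n:ℝ) / 2 ^ n * ((Q + 1) + 262144 * (j0:ℝ) ^ 2 / n * (2 ^ n * MM T (A.indicator 1) G (2 ^ n) x)) :=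
        mul_le_mul_of_nonneg_left h6 (by positivity)
    _ = 20 * ((n:ℝ) * (Q + 1)) / 2 ^ n + 5242880 * (j0:ℝ) ^ 2 * MM T (A.indicator 1) G (2 ^ n) x := by
        field_simp; ring
    _ ≤ _ := by
        refine add_le_add ?_ le_rfl
        rw [one_div, inv_pow, ← div_eq_mul_inv, div_le_div_iff₀ (by positivity) (by positivity)]
        calc 20 * ((n:ℝ) * (Q + 1)) * 2 ^ j0 = 20 * ((n:ℝ) * (Q + 1) * 2 ^ j0) := by ring
          _ ≤ 20 * (2 * 2 ^ n) := mul_le_mul_of_nonneg_left h7 (by norm_num)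
          _ = 40 * 2 ^ n := by ring

lemma MM_add (f : X → ℝ) (g h : ℤ → ℝ) (N : ℕ) (x : X) : 
    MM T f (fun m => g m + h m) N x = MM T f g N x + MM T f h N x := by
  simp only [MM, add_mul, Finset.sum_add_distrib, mul_add]

lemma MM_sum (f : X → ℝ) (g : ℕ → ℤ → ℝ) (d N : ℕ) (x : X) : 
    MM T f (fun m => ∑ k ∈ range d, g k m) N x = ∑ k ∈ range d, MM T f (g k) N x := by
  simp only [MM, Finset.sum_mul]
  rw [Finset.sum_comm, Finset.mul_sum]

lemma decomp (j0 d Q N : ℕ) (f : X → ℝ) (x : X) : 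
    MM T f (fun m => nu (256 ^ j0) (256 ^ (j0 + d)) m * kap (256 ^ (j0 + d)) Q m) N x =
    MM T f (fun _ => 1) N x + (∑ k ∈ range d, MM T f (fun m => nu (256 ^ j0) (256 ^ (j0 + k + 1)) m 
      - nu (256 ^ j0) (256 ^ (j0 + k)) m) N x)
      + MM T f (fun m => nu (256 ^ j0) (256 ^ (j0 + d)) m * (kap (256 ^ (j0 + d)) Q m - 1)) N x := by
  rw [← MM_sum, ← MM_add, ← MM_add]
  congr 1
  funext m
  have h := Finset.sum_range_sub (fun k => nu (256 ^ j0) (256 ^ (j0 + k)) m) d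
  simp only [← add_assoc, add_zero] at h
  rw [h]
  have : nu (256 ^ j0) (256 ^ j0) m = 1 := by simp [nu, Pr_self]
  rw [this]; ring

lemma pigeon (a : ℕ → ℝ) (d : ℕ) {s : ℝ} (hs : 0 ≤ s) (h : s < ∑ k ∈ range d, a k) : 
    ∃ k < d, s * (1/2) ^ (k+1) < a k := by
  by_contra hcon
  push Not at hcon
  have h1 : ∑ k ∈ range d, a k ≤ ∑ k ∈ range d, s * (1/2) ^ (k+1) := 
    Finset.sum_le_sum fun k hk => hcon k (Finset.mem_range.1 hk)
  have h2 : ∀ d : ℕ, ∑ k ∈ range d, s * (1/2:ℝ) ^ (k+1) = s * (1 - (1/2) ^ d) := by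
    intro d
    induction d with
    | zero => simp
    | succ d ih => rw [Finset.sum_range_succ, ih, pow_succ]; ring
  rw [h2, mul_sub, mul_one] at h1
  have : 0 ≤ s * (1/2:ℝ) ^ d := by positivity
  generalize s * (1/2:ℝ) ^ d = z at h1 this
  linarith

end Ptw

section Fin
variable {X : Type*} [MeasurableSpace X] {μ : Measure X} [IsProbabilityMeasure μ] {T : X → X} {A : Set X}

lemma mu_max (hT : MeasurePreserving T μ μ) (hA : MeasurableSet A) {j0 : ℕ} (hj0 : 8 ≤ j0) 
    (hα : (1/2:ℝ) ^ j0 ≤ μ.real A) {s : ℝ} (hs : μ.real A ≤ s) :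
    μ {x | ∃ N : ℕ, 2 ≤ N ∧ 10485760 * (j0:ℝ) ^ 2 * s < ergAvg T (A.indicator 1) N x} ≤
      ENNReal.ofReal ((3 + 9240 * C0) * μ.real A / s) := by
  have hαpos : 0 < μ.real A := lt_of_lt_of_le (by positivity) hα
  have hspos : 0 < s := hαpos.trans_le hs
  have hC := C0_pos
  have hj1 : (8:ℝ) ≤ j0 := by exact_mod_cast hj0
  have hj2 : (j0:ℝ) ≤ (j0:ℝ) ^ 2 := by nlinarith
  set E1 : Set X := {x | ∃ b : ℕ, s / 3 * b < ∑ q ∈ range b, (A.indicator 1 (T^[q] x) : ℝ)} with hE1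
  set E2 : ℕ → Set X := fun k => {x | ∃ n : ℕ, 512 ^ (j0 + k + 1) ≤ n ∧ (s/3) * (1/2) ^ (k+1) < 
      MM T (A.indicator 1) (fun m => nu (256 ^ j0) (256 ^ (j0 + k + 1)) m - nu (256 ^ j0) (256 ^ (j0 + k)) m) (2 ^ n) x} with hE2
  set E3 : ℕ → Set X := fun k => {x | ∃ n : ℕ, n < 512 ^ (j0 + k + 1) ∧ (j0 + k = j0 ∨ 512 ^ (j0 + k) ≤ n) ∧ s / 3 < MM T (A.indicator 1) 
      (fun m => nu (256 ^ j0) (256 ^ (j0 + k)) m * (kap (256 ^ (j0 + k)) (2 ^ (n/64)) m - 1)) (2 ^ n) x} with hE3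
  have m1 : μ E1 ≤ ENNReal.ofReal (3 * μ.real A / s) := by
    have := maximal_ergodic hT (ind_meas hA) ind_nonneg ind_abs (by positivity : 0 < s / 3)
    refine this.trans (ENNReal.ofReal_le_ofReal (le_of_eq ?_))
    rw [integral_indicator_one hA]
    field_simp
  have m2 : μ (⋃ k, E2 k) ≤ ENNReal.ofReal (12 * C0 * μ.real A / s * 2) :=
    iUnion_geo E2 (by positivity) fun k => gi_meas hT hA hj0 hα hs k
  have m3 : μ (⋃ k, E3 k) ≤ ENNReal.ofReal (4608 * C0 * μ.real A / s * 2) :=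
    iUnion_geo E3 (by positivity) fun k => err_all hT hA hj0 hα hs k
  have hM1 : ∀ (n : ℕ) (x : X), s / 3 < MM T (A.indicator 1) (fun _ => 1) (2 ^ n) x → x ∈ E1 := by
    intro n x hx
    refine ⟨2 ^ n, ?_⟩
    have := MM_eq (T := T) (A.indicator 1) (fun _ => 1) n x
    simp only [one_mul] at this
    rw [this]; push_cast
    rw [mul_comm]
    exact mul_lt_mul_of_pos_left hx (by positivity)
  have hsub : {x | ∃ N : ℕ, 2 ≤ N ∧ 10485760 * (j0:ℝ) ^ 2 * s < ergAvg T (A.indicator 1) N x} ⊆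
      E1 ∪ ((⋃ k, E2 k) ∪ (⋃ k, E3 k)) := by
    rintro x ⟨N, hN, hx⟩
    rcases le_or_gt (Nat.log 2 N + 1) (1024 * j0) with hn | hn
    · left
      refine hM1 (Nat.log 2 N + 1) x ?_
      have h1 := hx.trans_le (pt_small (T := T) (A := A) N hN x hn)
      by_contra hcon
      have h2 := mul_le_mul_of_nonneg_left (not_lt.1 hcon) (by positivity : 0 ≤ 20480 * (j0:ℝ))
      have h5 := mul_le_mul_of_nonneg_right hj2 hspos.le
      have h6 := mul_pos (by positivity : (0:ℝ) < j0) hspos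
      clear hα
      nlinarith
    · obtain ⟨d, hd1, hd2, hd3⟩ : ∃ d, (j0 + d = j0 ∨ 512 ^ (j0 + d) ≤ Nat.log 2 N + 1) ∧ 
          Nat.log 2 N + 1 < 512 ^ (j0 + d + 1) ∧ (∀ k < d, 512 ^ (j0 + k + 1) ≤ Nat.log 2 N + 1) := by
        have a1 := Nat.pow_log_le_self 512 (by omega : Nat.log 2 N + 1 ≠ 0)
        have a2 := Nat.lt_pow_succ_log_self (by norm_num : 1 < 512) (Nat.log 2 N + 1)
        set L := Nat.log 512 (Nat.log 2 N + 1)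
        rcases le_or_gt L j0 with hL | hL
        · refine ⟨0, Or.inl rfl, a2.trans_le (Nat.pow_le_pow_right (by norm_num) (by omega)), fun k hk => by omega⟩
        · refine ⟨L - j0, Or.inr ?_, ?_, ?_⟩
          · rwa [Nat.add_sub_cancel' hL.le]
          · rwa [Nat.add_sub_cancel' hL.le]
          · intro k hk
            exact (Nat.pow_le_pow_right (by norm_num) (by omega)).trans a1
      have h1 := hx.trans_le (pt_large (T := T) (A := A) N hN x hj0 hn.le (Nat.le_add_right j0 d) hd1)
      set n := Nat.log 2 N + 1 with hnd
      rw [decomp] at h1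
      by_contra hcon
      rw [Set.mem_union, Set.mem_union, not_or, not_or, Set.mem_iUnion, Set.mem_iUnion] at hcon
      obtain ⟨c1, c2, c3⟩ := hcon
      have b1 := not_lt.1 fun h => c1 (hM1 n x h)
      have b3 := not_lt.1 fun h => c3 ⟨d, n, hd2, hd1, h⟩
      have b2 := not_lt.1 fun h => by
        obtain ⟨k, hk, hk2⟩ := pigeon _ d (by positivity : 0 ≤ s / 3) h
        exact c2 ⟨k, n, hd3 k hk, hk2⟩
      have hsum := add_le_add (add_le_add b1 b2) b3
      have hm := mul_le_mul_of_nonneg_left hsum (by positivity : 0 ≤ 5242880 * (j0:ℝ) ^ 2)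
      have h4 := hα.trans hs
      have h5 := mul_le_mul_of_nonneg_right hj2 hspos.le
      have h6 := mul_le_mul_of_nonneg_right hj1 hspos.le
      clear hα
      generalize (1/2:ℝ) ^ j0 = z at h1 h4
      nlinarith
  refine (measure_mono hsub).trans ((measure_union_le _ _).trans ((add_le_add m1 
    ((measure_union_le _ _).trans (add_le_add m2 m3))).trans ?_))
  rw [← ENNReal.ofReal_add (by positivity) (by positivity), ← ENNReal.ofReal_add (by positivity) (by positivity)]
  refine ENNReal.ofReal_le_ofReal (le_of_eq ?_)
  ring

end Fin
end PrimeMax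

/-- Restricted weak type Orlicz inequality: for every probability space, measure-preserving
`T` and measurable `A` with `μ(A) > 0`,
`sup_{λ>0} λ · μ{x : sup_{N ≥ 2} 𝒜_N(𝟙_A)(x) > λ} ≤ C μ(A) log²(e/μ(A))`. -/
theorem stmt_3 :
    ∃ C : ℝ, 0 < C ∧
      ∀ (X : Type u) [MeasurableSpace X] (μ : Measure X), IsProbabilityMeasure μ →
        ∀ (T : X → X), Measurable T → MeasurePreserving T μ μ →
          ∀ (A : Set X), MeasurableSet A → 0 < μ A →
            ∀ l : ℝ, 0 < l →
              ENNReal.ofReal l * μ {x | ∃ N : ℕ, 2 ≤ N ∧ l < ergAvg T (A.indicator 1) N x} ≤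
                ENNReal.ofReal
                  (C * (μ A).toReal * (Real.log (Real.exp 1 / (μ A).toReal)) ^ 2) := by
  have hC := PrimeMax.C0_pos
  refine ⟨849346560 * (3 + 9240 * PrimeMax.C0), by positivity, ?_⟩
  intro X _ μ hμ T _hTm hT A hA hApos l hl
  have hαpos : 0 < μ.real A := ENNReal.toReal_pos hApos.ne' (measure_ne_top μ A)
  have hα1 : μ.real A ≤ 1 := measureReal_le_one
  change _ ≤ ENNReal.ofReal (_ * μ.real A * (Real.log (Real.exp 1 / μ.real A)) ^ 2)
  set α := μ.real A with hαd
  have hLe : Real.log (Real.exp 1 / α) = 1 - Real.log α := by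
    rw [Real.log_div (Real.exp_pos 1).ne' hαpos.ne', Real.log_exp]
  set L := Real.log (Real.exp 1 / α) with hL
  have hL1 : 1 ≤ L := by
    have := Real.log_nonpos hαpos.le hα1
    linarith
  set j0 := ⌈8 * L⌉₊ with hj
  have hja : 8 * L ≤ j0 := Nat.le_ceil _
  have hjb : (j0:ℝ) < 8 * L + 1 := Nat.ceil_lt_add_one (by linarith)
  have hj0 : 8 ≤ j0 := by
    have : (8:ℝ) ≤ j0 := by linarith
    exact_mod_cast this
  have hα : (1/2:ℝ) ^ j0 ≤ α := by
    rw [← Real.log_le_log_iff (by positivity) hαpos, Real.log_pow, one_div, Real.log_inv]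
    have h2 : (1/2:ℝ) ≤ Real.log 2 := by linarith [Real.log_two_gt_d9]
    have h3 : (j0:ℝ) * (1/2) ≤ j0 * Real.log 2 := mul_le_mul_of_nonneg_left h2 (by positivity)
    linarith
  have hj9 : (j0:ℝ) ^ 2 ≤ 81 * L ^ 2 := by
    have : (j0:ℝ) ≤ 9 * L := by linarith
    calc (j0:ℝ) ^ 2 ≤ (9 * L) ^ 2 := pow_le_pow_left₀ (by positivity) this 2
      _ = _ := by ring
  have hj0p : (0:ℝ) < j0 := by linarith
  set s := l / (10485760 * (j0:ℝ) ^ 2) with hs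
  have hls : 10485760 * (j0:ℝ) ^ 2 * s = l := by rw [hs]; field_simp
  have hspos : 0 < s := by positivity
  have hfin : 10485760 * (j0:ℝ) ^ 2 * ((3 + 9240 * PrimeMax.C0) * α) ≤ 
      849346560 * (3 + 9240 * PrimeMax.C0) * α * L ^ 2 := by
    have : 0 ≤ (3 + 9240 * PrimeMax.C0) * α := by positivity
    nlinarith [mul_le_mul_of_nonneg_right hj9 this]
  rcases le_or_gt α s with h | h
  · have hm := PrimeMax.mu_max (μ := μ) hT hA hj0 hα h
    rw [hls] at hm
    refine (mul_le_mul_right hm _).trans ?_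
    rw [← ENNReal.ofReal_mul hl.le]
    refine ENNReal.ofReal_le_ofReal (le_trans (le_of_eq ?_) hfin)
    rw [← hls, ← hαd]
    field_simp
  · calc ENNReal.ofReal l * μ {x | ∃ N : ℕ, 2 ≤ N ∧ l < ergAvg T (A.indicator 1) N x} 
        ≤ ENNReal.ofReal l * 1 := mul_le_mul_right prob_le_one _
      _ = ENNReal.ofReal l := mul_one _
      _ ≤ _ := by
        refine ENNReal.ofReal_le_ofReal (le_trans ?_ hfin)
        rw [← hls]
        refine mul_le_mul_of_nonneg_left ?_ (by positivity)
        nlinarith
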